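/- arXiv:2010.03727 — 2 statements merged into one kernel-verified Lean document; each statement's English description precedes it below -/
import Mathlib

section
/- For every real z with 0 < z < 1, with √(z²−z) = i√(z−z²) and w = √(1 − 2z − 2√(z² − z)) (principal branch), one has ₄F₃(1/4, 1/4, 3/4, 3/4; 1/2, 1, 1; z) = (4/π²)·K(1/2 − 1/(2w))·K(1/2 − w/2), as an identity between complex numbers with K extended analytically. -/
noncomputable def poch (a : ℝ) (n : ℕ) : ℝ := ∏ i ∈ Finset.range n, (a + i)

/-- Complete elliptic integral of the first kind with (complex) parameter `m`:
`K(m) = ∫₀^{π/2} dθ / √(1 - m sin²θ)`, with the principal square root. -/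
noncomputable def ellK (m : ℂ) : ℂ :=
  ∫ θ in (0:ℝ)..(Real.pi/2), ((1 : ℂ) - m * (Real.sin θ : ℂ)^2) ^ (-(1/2) : ℂ)

open Finset

/-- The Taylor coefficients `(1/2)ₙ / n!` of `(1 - x)^(-1/2)`. -/
noncomputable def halfCoeff (n : ℕ) : ℝ := n.centralBinom / 4 ^ n

lemma halfCoeff_zero : halfCoeff 0 = 1 := by simp [halfCoeff]

lemma succ_mul_halfCoeff_succ (n : ℕ) :
    (n + 1 : ℝ) * halfCoeff (n + 1) = (n + 1 / 2) * halfCoeff n := by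
  have h : ((n + 1 : ℕ) : ℝ) * ((n + 1).centralBinom : ℝ)
      = ((2 * (2 * n + 1) : ℕ) : ℝ) * n.centralBinom := by
    exact_mod_cast Nat.succ_mul_centralBinom_succ n
  push_cast at h
  unfold halfCoeff
  rw [pow_succ]
  field_simp
  linear_combination 2 * h

lemma halfCoeff_nonneg (n : ℕ) : 0 ≤ halfCoeff n := by unfold halfCoeff; positivity

lemma halfCoeff_le_one (n : ℕ) : halfCoeff n ≤ 1 := by
  induction n with
  | zero => simp [halfCoeff_zero]
  | succ n ih =>
    have h := succ_mul_halfCoeff_succ n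
    have h0 := halfCoeff_nonneg n
    have hn : (0 : ℝ) ≤ n := n.cast_nonneg
    nlinarith

/-- The coefficient of `u ^ i * v ^ j` in the linearisation polynomial of index `k`. -/
def linCoeff (k i j : ℕ) : ℝ := (-1) ^ (i + j + k) * k.choose i * k.choose j * (i + j).choose k

lemma cast_sub_mul_choose (n k : ℕ) :
    (k + 1 : ℝ) * n.choose (k + 1) = (n - k) * n.choose k := by
  rcases le_or_gt k n with h | h
  · have := Nat.choose_succ_right_eq n k
    rw [← Nat.cast_sub h]
    exact_mod_cast (by linarith : (k + 1) * n.choose (k + 1) = (n - k) * n.choose k)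
  · rw [Nat.choose_eq_zero_of_lt h, Nat.choose_eq_zero_of_lt (by omega)]; simp

lemma succ_mul_choose (n k : ℕ) :
    (n + 1 : ℝ) * n.choose k = (n + 1 - k) * (n + 1).choose k := by
  rcases k with _ | k
  · simp
  · have h := cast_sub_mul_choose n k
    have h2 : ((n + 1).choose (k + 1) : ℝ) = n.choose k + n.choose (k + 1) := by
      exact_mod_cast Nat.choose_succ_succ n k
    rw [h2]; push_cast
    linear_combination h

lemma linCoeff_succ_succ (k i j : ℕ) :
    ((i : ℝ) + 1) ^ 2 * linCoeff (k + 1) (i + 1) j = (k + 1) ^ 2 * linCoeff k i j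
      + (i * (i + 1) - (k + 1) * (k + 2)) * linCoeff (k + 1) i j := by
  have h1 := cast_sub_mul_choose (k + 1) i
  have h2 := succ_mul_choose k i
  have h3 := succ_mul_choose k j
  have h4 := cast_sub_mul_choose (i + j) k
  have h5 : ((i + 1 + j).choose (k + 1) : ℝ) = (i + j).choose k + (i + j).choose (k + 1) := by
    rw [show i + 1 + j = i + j + 1 by ring]
    exact_mod_cast Nat.choose_succ_succ (i + j) k
  unfold linCoeff
  rw [h5, show i + 1 + j + (k + 1) = i + j + k + 2 by ring,
    show i + j + (k + 1) = i + j + k + 1 by ring, pow_add _ _ 2, pow_succ]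
  push_cast at *
  generalize ((i + j).choose (k + 1) : ℝ) = d at *
  generalize ((i + j).choose k : ℝ) = c at *
  generalize ((k + 1).choose (i + 1) : ℝ) = x' at *
  generalize ((k + 1).choose i : ℝ) = x at *
  generalize ((k + 1).choose j : ℝ) = y at *
  generalize ((k).choose i : ℝ) = a at *
  generalize ((k).choose j : ℝ) = b at *
  linear_combination (-1) ^ (i + j + k) * ((i + 1) * y * (c + d) * h1 - c * (k + 1) * b * h2
    - c * (k + 1 - i) * x * h3 - (k + 1 - i) * x * y * h4)

lemma linCoeff_zero_succ (i j : ℕ) :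
    ((i : ℝ) + 1) ^ 2 * linCoeff 0 (i + 1) j = i * (i + 1) * linCoeff 0 i j := by
  rcases i with _ | i <;> simp [linCoeff]

lemma sum_halfCoeff_mul_linCoeff (i j N : ℕ) (hN : i + j < N) :
    ∑ k ∈ range N, halfCoeff k ^ 2 * linCoeff k i j = halfCoeff i ^ 2 * halfCoeff j ^ 2 := by
  induction i generalizing N with
  | zero =>
    rw [Finset.sum_eq_single j]
    · simp [linCoeff, halfCoeff_zero, ← two_mul]
    · intro k _ hk
      rcases lt_or_gt_of_ne hk with h | h
      · simp [linCoeff, Nat.choose_eq_zero_of_lt h]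
      · simp [linCoeff, Nat.choose_eq_zero_of_lt h]
    · intro h; simp at h; omega
  | succ i ih =>
    obtain ⟨M, rfl⟩ : ∃ M, N = M + 1 := ⟨N - 1, by omega⟩
    have e1 := ih M (by omega)
    have e2 := ih (M + 1) (by omega)
    have hi : (((i : ℝ) + 1) ^ 2) ≠ 0 := by positivity
    apply mul_left_cancel₀ hi
    rw [sum_range_succ'] at e2 ⊢
    have key : ∀ k, ((i : ℝ) + 1) ^ 2 * (halfCoeff (k + 1) ^ 2 * linCoeff (k + 1) (i + 1) j) =
        (k + 1 / 2) ^ 2 * (halfCoeff k ^ 2 * linCoeff k i j) +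
        i * (i + 1) * (halfCoeff (k + 1) ^ 2 * linCoeff (k + 1) i j)
        - (k + 1) * (k + 2) * (halfCoeff (k + 1) ^ 2 * linCoeff (k + 1) i j) := by
      intro k
      have h := succ_mul_halfCoeff_succ k
      linear_combination halfCoeff (k + 1) ^ 2 * linCoeff_succ_succ k i j
        + linCoeff k i j * (((k : ℝ) + 1) * halfCoeff (k + 1) + (k + 1 / 2) * halfCoeff k) * h
    have tele : ∑ k ∈ range M, ((k + 1 / 2 : ℝ) ^ 2 * (halfCoeff k ^ 2 * linCoeff k i j)
        - (k + 1) * (k + 2) * (halfCoeff (k + 1) ^ 2 * linCoeff (k + 1) i j)) =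
        1 / 4 * ∑ k ∈ range M, (halfCoeff k ^ 2 * linCoeff k i j) := by
      have h : ∀ M, ∑ k ∈ range M, ((k + 1 / 2 : ℝ) ^ 2 * (halfCoeff k ^ 2 * linCoeff k i j)
        - (k + 1) * (k + 2) * (halfCoeff (k + 1) ^ 2 * linCoeff (k + 1) i j)) =
        1 / 4 * ∑ k ∈ range M, (halfCoeff k ^ 2 * linCoeff k i j) -
          M * (M + 1) * (halfCoeff M ^ 2 * linCoeff M i j) := by
        intro M
        induction M with
        | zero => simp
        | succ M ihM =>
          rw [sum_range_succ, ihM, sum_range_succ]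
          push_cast
          ring
      rw [h]
      simp [linCoeff, Nat.choose_eq_zero_of_lt (show i + j < M by omega)]
    have h := succ_mul_halfCoeff_succ i
    rw [mul_add, mul_sum, sum_congr rfl fun k _ => key k]
    simp only [sum_sub_distrib, sum_add_distrib] at tele ⊢
    rw [← mul_sum (range M) (fun k => halfCoeff (k + 1) ^ 2 * linCoeff (k + 1) i j)]
    linear_combination tele + 1 / 4 * e1 + i * (i + 1) * e2
      + halfCoeff 0 ^ 2 * linCoeff_zero_succ i j
      - halfCoeff j ^ 2 * (((i : ℝ) + 1) * halfCoeff (i + 1) + (i + 1 / 2) * halfCoeff i) * h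

open Polynomial in
lemma sum_linCoeff_mul_pow {u v : ℂ} (huv : u + v = 2 * u * v) (k : ℕ) :
    ∑ p ∈ range (k + 1) ×ˢ range (k + 1), (linCoeff k p.1 p.2 : ℂ) * (u ^ p.1 * v ^ p.2)
      = if Even k then (k.choose (k / 2) : ℂ) * (u * v * (1 - u * v)) ^ (k / 2) else 0 := by
  have expand (w : ℂ) : (1 - C w * (1 + X)) ^ k
      = ∑ i ∈ range (k + 1), C ((-1) ^ i * w ^ i * k.choose i) * (1 + X) ^ i := by
    rw [sub_eq_add_neg, add_comm, add_pow]
    refine sum_congr rfl fun i _ => ?_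
    simp only [one_pow, mul_one, map_mul, map_pow, map_neg, map_one, map_natCast]
    rw [neg_pow, mul_pow]
    ring
  have h1 : ((1 - C u * (1 + X)) ^ k * (1 - C v * (1 + X)) ^ k).coeff k
      = (-1) ^ k * ∑ p ∈ range (k + 1) ×ˢ range (k + 1),
        (linCoeff k p.1 p.2 : ℂ) * (u ^ p.1 * v ^ p.2) := by
    rw [expand, expand, sum_mul_sum, ← sum_product', finsetSum_coeff, mul_sum]
    refine sum_congr rfl fun p _ => ?_
    rw [show ∀ a b : ℂ, C a * (1 + X) ^ p.1 * (C b * (1 + X) ^ p.2)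
      = C (a * b) * (1 + X) ^ (p.1 + p.2) by intro a b; rw [pow_add, C_mul]; ring,
      coeff_C_mul, coeff_one_add_X_pow]
    have hs : ((-1 : ℂ) ^ k) * (-1) ^ k = 1 := by rw [← mul_pow]; simp
    simp only [linCoeff, pow_add]
    push_cast
    linear_combination (-(-1 : ℂ) ^ p.1 * (-1) ^ p.2 * u ^ p.1 * v ^ p.2 * k.choose p.1
      * k.choose p.2 * (p.1 + p.2).choose k) * hs
  have h2 : ((1 - C u * (1 + X)) ^ k * (1 - C v * (1 + X)) ^ k).coeff k
      = if Even k then (k.choose (k / 2) : ℂ) * (u * v * (1 - u * v)) ^ (k / 2) else 0 := by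
    have e : (1 - C u * (1 + X)) * (1 - C v * (1 + X)) = C (u * v) * X ^ 2 + C (1 - u * v) := by
      have := congrArg C huv
      simp only [map_add, map_mul, map_sub, map_one, map_ofNat] at this ⊢
      linear_combination -(1 + X) * this
    rw [← mul_pow, e, add_pow, finsetSum_coeff]
    have t (l : ℕ) : ((C (u * v) * X ^ 2) ^ l * C (1 - u * v) ^ (k - l) * (k.choose l : ℂ[X])).coeff k
        = if k = 2 * l then (u * v) ^ l * (1 - u * v) ^ (k - l) * k.choose l else 0 := by
      rw [mul_pow, ← pow_mul, ← C_pow, ← C_pow, ← C_eq_natCast,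
        show ∀ a b c : ℂ, C a * X ^ (2 * l) * C b * C c = C (a * b * c) * X ^ (2 * l) by
          intro a b c; simp only [C_mul]; ring, coeff_C_mul_X_pow]
    simp only [t]
    split_ifs with hk
    · obtain ⟨l, rfl⟩ := hk
      rw [sum_eq_single l]
      · simp only [← two_mul, if_true, Nat.mul_div_cancel_left l two_pos, mul_pow]
        rw [show 2 * l - l = l by omega]; ring
      · exact fun b _ hb => if_neg (by omega)
      · intro h; simp at h
    · refine sum_eq_zero fun l _ => if_neg fun h => hk ⟨l, by omega⟩
  have hs : ((-1 : ℂ) ^ k) * (-1) ^ k = 1 := by rw [← mul_pow]; simp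
  rw [h1] at h2
  have h3 := congrArg (fun x => (-1) ^ k * x) h2
  simp only [← mul_assoc, hs, one_mul] at h3
  simp only [mul_assoc] at h3 ⊢
  rw [h3]
  split_ifs with hk
  · simp [hk.neg_one_pow]
  · simp

/-- The power series `₂F₁(1/2, 1/2; 1; m)`. -/
noncomputable def hypHalf (m : ℂ) : ℂ := ∑' n : ℕ, ((halfCoeff n ^ 2 : ℝ) : ℂ) * m ^ n

/-- The power series `₄F₃(1/4, 1/4, 3/4, 3/4; 1/2, 1, 1; x)`. -/
noncomputable def fourF3 (x : ℂ) : ℂ :=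
  ∑' n : ℕ, ((halfCoeff (2 * n) ^ 2 * halfCoeff n : ℝ) : ℂ) * x ^ n

lemma abs_linCoeff_mul_pow_le {ρ : ℝ} (h0 : 0 ≤ ρ) (h1 : ρ ≤ 1) (k i j : ℕ) :
    |linCoeff k i j| * (ρ ^ 2) ^ (i + j) ≤ (16 * ρ) ^ k * (ρ ^ i * ρ ^ j) := by
  by_cases h : i ≤ k ∧ j ≤ k ∧ k ≤ i + j
  · obtain ⟨hi, hj, hk⟩ := h
    have e : |linCoeff k i j| = k.choose i * k.choose j * (i + j).choose k := by
      simp [linCoeff, abs_mul]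
    have b1 : (k.choose i : ℝ) ≤ 2 ^ k := by exact_mod_cast Nat.choose_le_two_pow k i
    have b2 : (k.choose j : ℝ) ≤ 2 ^ k := by exact_mod_cast Nat.choose_le_two_pow k j
    have b3 : ((i + j).choose k : ℝ) ≤ 4 ^ k := by
      calc ((i + j).choose k : ℝ) ≤ 2 ^ (i + j) := by exact_mod_cast Nat.choose_le_two_pow _ _
        _ ≤ 2 ^ (2 * k) := pow_le_pow_right₀ one_le_two (by omega)
        _ = 4 ^ k := by rw [pow_mul]; norm_num
    have b4 : ρ ^ (i + j) ≤ ρ ^ k := pow_le_pow_of_le_one h0 h1 hk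
    calc |linCoeff k i j| * (ρ ^ 2) ^ (i + j)
        = (k.choose i * k.choose j * (i + j).choose k) * ρ ^ (i + j) * (ρ ^ i * ρ ^ j) := by
          rw [e]; ring
      _ ≤ (2 ^ k * 2 ^ k * 4 ^ k) * ρ ^ k * (ρ ^ i * ρ ^ j) := by gcongr
      _ = (16 * ρ) ^ k * (ρ ^ i * ρ ^ j) := by
          rw [← mul_pow, ← mul_pow, ← mul_pow]; norm_num
  · have : linCoeff k i j = 0 := by
      by_cases hi : i ≤ k
      · by_cases hj : j ≤ k
        · simp [linCoeff, Nat.choose_eq_zero_of_lt (show i + j < k by omega)]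
        · simp [linCoeff, Nat.choose_eq_zero_of_lt (not_le.1 hj)]
      · simp [linCoeff, Nat.choose_eq_zero_of_lt (not_le.1 hi)]
    rw [this]; simp only [abs_zero, zero_mul]; positivity

lemma halfCoeff_sq_le_one (n : ℕ) : halfCoeff n ^ 2 ≤ 1 :=
  pow_le_one₀ (halfCoeff_nonneg n) (halfCoeff_le_one n)

lemma norm_coeff_mul_pow_le {a : ℕ → ℝ} (ha0 : ∀ n, 0 ≤ a n) (ha1 : ∀ n, a n ≤ 1) {r : ℝ} {x : ℂ}
    (hx : ‖x‖ ≤ r) (n : ℕ) : ‖(a n : ℂ) * x ^ n‖ ≤ r ^ n := by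
  rw [norm_mul, norm_pow, Complex.norm_real, Real.norm_of_nonneg (ha0 n)]
  calc a n * ‖x‖ ^ n ≤ 1 * r ^ n := by gcongr; exact ha1 n
    _ = r ^ n := one_mul _

lemma hypHalf_mul_hypHalf_of_norm_le {u v : ℂ} {ρ : ℝ} (h0 : 0 ≤ ρ) (h1 : ρ < 1 / 16)
    (hu : ‖u‖ ≤ ρ ^ 2) (hv : ‖v‖ ≤ ρ ^ 2) (huv : u + v = 2 * u * v) :
    hypHalf u * hypHalf v = fourF3 (4 * (u * v * (1 - u * v))) := by
  set T : ℕ → ℕ × ℕ → ℂ := fun k p =>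
    ((halfCoeff k ^ 2 : ℝ) : ℂ) * ((linCoeff k p.1 p.2 : ℂ) * (u ^ p.1 * v ^ p.2)) with hT
  have hsum : Summable (Function.uncurry T) := by
    have g1 : Summable fun k : ℕ => (16 * ρ) ^ k :=
      summable_geometric_of_lt_one (by positivity) (by linarith)
    have g2 : Summable fun k : ℕ => ρ ^ k := summable_geometric_of_lt_one h0 (by linarith)
    have g3 := g1.mul_of_nonneg (g2.mul_of_nonneg g2 (fun _ => by positivity)
      (fun _ => by positivity)) (fun _ => by positivity)
      (fun _ => mul_nonneg (by positivity) (by positivity))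
    refine Summable.of_norm_bounded g3 ?_
    rintro ⟨k, i, j⟩
    refine le_trans ?_ (abs_linCoeff_mul_pow_le h0 (by linarith) k i j)
    simp only [Function.uncurry_apply_pair, hT, norm_mul, norm_pow, Complex.norm_real]
    calc _ ≤ 1 * (‖linCoeff k i j‖ * ((ρ ^ 2) ^ i * (ρ ^ 2) ^ j)) := by
          gcongr
          rw [← norm_pow, Real.norm_of_nonneg (sq_nonneg _)]; exact halfCoeff_sq_le_one k
      _ = _ := by rw [one_mul, pow_add, Real.norm_eq_abs]
  have hsummable {w : ℂ} (hw : ‖w‖ ≤ ρ ^ 2) :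
      Summable fun n : ℕ => ‖((halfCoeff n ^ 2 : ℝ) : ℂ) * w ^ n‖ := by
    refine Summable.of_nonneg_of_le (fun _ => norm_nonneg _) (norm_coeff_mul_pow_le
      (fun n => sq_nonneg _) halfCoeff_sq_le_one hw)
      (summable_geometric_of_lt_one (by positivity) (by nlinarith))
  have hcol (p : ℕ × ℕ) : ∑' k, T k p
      = ((halfCoeff p.1 ^ 2 : ℝ) : ℂ) * u ^ p.1 * (((halfCoeff p.2 ^ 2 : ℝ) : ℂ) * v ^ p.2) := by
    rw [tsum_eq_sum (s := range (p.1 + p.2 + 1))]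
    · have := congrArg (fun x : ℝ => (x : ℂ))
        (sum_halfCoeff_mul_linCoeff p.1 p.2 _ (Nat.lt_succ_self _))
      push_cast at this
      simp only [hT]
      push_cast
      simp only [← mul_assoc]
      rw [← sum_mul, ← sum_mul, this]
      ring
    · intro k hk
      have : p.1 + p.2 < k := by simp at hk; omega
      simp [hT, linCoeff, Nat.choose_eq_zero_of_lt this]
  have hrow (k : ℕ) : ∑' p, T k p = ((halfCoeff k ^ 2 : ℝ) : ℂ) *
      if Even k then (k.choose (k / 2) : ℂ) * (u * v * (1 - u * v)) ^ (k / 2) else 0 := by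
    rw [← sum_linCoeff_mul_pow huv, mul_sum, tsum_eq_sum]
    rintro ⟨i, j⟩ hp
    have : k < i ∨ k < j := by simp at hp; omega
    rcases this with h | h <;> simp [hT, linCoeff, Nat.choose_eq_zero_of_lt h]
  unfold hypHalf
  rw [tsum_mul_tsum_of_summable_norm (hsummable hu) (hsummable hv), ← tsum_congr hcol,
    hsum.tsum_comm, tsum_congr hrow, fourF3]
  rw [← (mul_right_injective₀ (two_ne_zero' ℕ)).tsum_eq]
  · refine tsum_congr fun n => ?_
    simp only [even_two_mul, if_true, Nat.mul_div_cancel_left n two_pos]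
    rw [mul_pow, halfCoeff, halfCoeff, Nat.centralBinom_eq_two_mul_choose n]
    push_cast
    field_simp
    rw [mul_pow _ 4, mul_pow (u * v)]
    ring
  · intro k hk
    by_contra h
    refine hk (mul_eq_zero_of_right _ (if_neg fun he => h ?_))
    obtain ⟨l, rfl⟩ := he
    exact ⟨l, by simp; ring⟩

lemma multichoose_half (n : ℕ) : Ring.multichoose (1 / 2 : ℂ) n = halfCoeff n := by
  induction n with
  | zero => simp [halfCoeff_zero]
  | succ n ih =>
    have e (n : ℕ) : (n.factorial : ℂ) * Ring.multichoose (1 / 2 : ℂ) n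
        = (ascPochhammer ℂ n).eval (1 / 2) := by
      rw [← nsmul_eq_mul, Ring.factorial_nsmul_multichoose_eq_ascPochhammer,
        Polynomial.ascPochhammer_smeval_eq_eval]
    have h1 := e (n + 1)
    rw [ascPochhammer_succ_eval, ← e n, ih, Nat.factorial_succ] at h1
    have h2 := congrArg (fun x : ℝ => (x : ℂ)) (succ_mul_halfCoeff_succ n)
    have h3 : ((n + 1 : ℕ) : ℂ) ≠ 0 := by exact_mod_cast n.succ_ne_zero
    have h4 : (n.factorial : ℂ) ≠ 0 := by exact_mod_cast n.factorial_ne_zero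
    apply mul_left_cancel₀ (mul_ne_zero h3 h4)
    push_cast at *
    linear_combination h1 - (n.factorial : ℂ) * h2

lemma hasSum_one_sub_cpow_neg_half {x : ℂ} (hx : ‖x‖ < 1) :
    HasSum (fun n : ℕ => (halfCoeff n : ℂ) * x ^ n) ((1 - x) ^ (-(1 / 2) : ℂ)) := by
  have h := (Complex.one_div_one_sub_cpow_hasFPowerSeriesOnBall_zero (1 / 2)).hasSum
    (y := x) (by rw [Metric.mem_eball, edist_zero_right, ← ofReal_norm, ENNReal.ofReal_lt_one]; exact hx)
  simp only [zero_add, FormalMultilinearSeries.ofScalars_apply_eq, one_div] at h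
  rw [Complex.cpow_neg, one_div]
  simpa only [← multichoose_half, Ring.multichoose_eq, one_div, smul_eq_mul] using h

lemma integral_sin_pow_two_mul (n : ℕ) :
    ∫ θ in (0 : ℝ)..(Real.pi / 2), Real.sin θ ^ (2 * n) = Real.pi / 2 * halfCoeff n := by
  have h1 : ∫ θ in (0 : ℝ)..(Real.pi / 2), Real.sin θ ^ (2 * n)
      = ∫ θ in (0 : ℝ)..(Real.pi / 2), Real.cos θ ^ (2 * n) := by
    have := intervalIntegral.integral_comp_sub_left (a := 0) (b := Real.pi / 2)
      (fun θ => Real.sin θ ^ (2 * n)) (Real.pi / 2)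
    simpa [Real.sin_pi_div_two_sub] using this.symm
  have h2 : ∏ i ∈ range n, (2 * (i : ℝ) + 1) / (2 * i + 2) = halfCoeff n := by
    clear h1
    induction n with
    | zero => simp [halfCoeff_zero]
    | succ n ih =>
      have h := succ_mul_halfCoeff_succ n
      rw [prod_range_succ, ih]
      field_simp
      linear_combination -2 * h
  rw [h1, EulerSine.integral_cos_pow_eq, integral_sin_pow_even, h2]
  ring

lemma ellK_eq_hypHalf {m : ℂ} (hm : ‖m‖ < 1) : ellK m = Real.pi / 2 * hypHalf m := by
  have hsin (θ : ℝ) : ‖m * (Real.sin θ : ℂ) ^ 2‖ ≤ ‖m‖ := by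
    rw [norm_mul, norm_pow, Complex.norm_real]
    exact mul_le_of_le_one_right (norm_nonneg _)
      (pow_le_one₀ (norm_nonneg _) (Real.abs_sin_le_one θ))
  have h := intervalIntegral.hasSum_integral_of_dominated_convergence (a := 0) (b := Real.pi / 2)
    (μ := MeasureTheory.volume)
    (F := fun n θ => (halfCoeff n : ℂ) * (m * (Real.sin θ : ℂ) ^ 2) ^ n)
    (f := fun θ => ((1 : ℂ) - m * (Real.sin θ : ℂ) ^ 2) ^ (-(1 / 2) : ℂ))
    (fun n _ => ‖m‖ ^ n)
    (fun n => Continuous.aestronglyMeasurable (by fun_prop))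
    (fun n => .of_forall fun θ _ =>
      norm_coeff_mul_pow_le halfCoeff_nonneg halfCoeff_le_one (hsin θ) n)
    (.of_forall fun θ _ => summable_geometric_of_lt_one (norm_nonneg _) hm)
    intervalIntegrable_const
    (.of_forall fun θ _ => hasSum_one_sub_cpow_neg_half ((hsin θ).trans_lt hm))
  rw [ellK, ← h.tsum_eq, hypHalf, ← tsum_mul_left]
  refine tsum_congr fun n => ?_
  have := congrArg (fun x : ℝ => (x : ℂ)) (integral_sin_pow_two_mul n)
  simp only [← intervalIntegral.integral_ofReal] at this
  simp only [mul_pow, ← pow_mul, intervalIntegral.integral_const_mul]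
  push_cast at this ⊢
  rw [this]
  ring

lemma analyticAt_tsum_coeff_mul_pow {a : ℕ → ℝ} (ha0 : ∀ n, 0 ≤ a n) (ha1 : ∀ n, a n ≤ 1) {x : ℂ}
    (hx : ‖x‖ < 1) : AnalyticAt ℂ (fun x => ∑' n : ℕ, (a n : ℂ) * x ^ n) x := by
  obtain ⟨r, hr, hr1⟩ := exists_between hx
  have hd : DifferentiableOn ℂ (fun x => ∑' n : ℕ, (a n : ℂ) * x ^ n) (Metric.ball 0 r) :=
    Complex.differentiableOn_tsum_of_summable_norm
      (summable_geometric_of_lt_one ((norm_nonneg x).trans hr.le) hr1)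
      (fun n => by fun_prop) Metric.isOpen_ball
      (fun n w hw => norm_coeff_mul_pow_le ha0 ha1 (mem_ball_zero_iff.1 hw).le n)
  exact hd.analyticAt (Metric.isOpen_ball.mem_nhds (mem_ball_zero_iff.2 hr))

/-- The point `(1 - exp (i φ)) / 2`. -/
noncomputable def halfChord (φ : ℝ) : ℂ := (1 - Complex.exp (φ * Complex.I)) / 2

lemma exp_mul_exp_neg (φ : ℝ) :
    Complex.exp (φ * Complex.I) * Complex.exp ((-φ : ℝ) * Complex.I) = 1 := by
  rw [← Complex.exp_add]; simp

lemma halfChord_add_halfChord_neg (φ : ℝ) :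
    halfChord φ + halfChord (-φ) = 2 * halfChord φ * halfChord (-φ) := by
  unfold halfChord
  linear_combination -exp_mul_exp_neg φ / 2

lemma four_mul_halfChord_mul (φ : ℝ) :
    4 * (halfChord φ * halfChord (-φ) * (1 - halfChord φ * halfChord (-φ)))
      = (Real.sin φ : ℂ) ^ 2 := by
  have h : halfChord φ * halfChord (-φ) = (1 - Complex.cos φ) / 2 := by
    have h1 := exp_mul_exp_neg φ
    have h2 := Complex.two_cos (φ : ℂ)
    unfold halfChord
    push_cast at h1 ⊢
    linear_combination h1 / 4 + h2 / 4
  rw [h]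
  push_cast
  linear_combination -Complex.sin_sq_add_cos_sq (φ : ℂ)

lemma norm_halfChord_lt_one {φ : ℝ} (h : 0 < Real.cos φ) : ‖halfChord φ‖ < 1 := by
  have : ‖halfChord φ‖ ^ 2 < 1 := by
    rw [← Complex.normSq_eq_norm_sq, Complex.normSq_apply, halfChord, Complex.exp_mul_I]
    simp [Complex.cos_ofReal_re, Complex.cos_ofReal_im, Complex.sin_ofReal_re, Complex.sin_ofReal_im]
    nlinarith [Real.sin_sq_add_cos_sq φ]
  nlinarith [norm_nonneg (halfChord φ)]

lemma analyticAt_halfChord (φ : ℝ) : AnalyticAt ℝ halfChord φ := by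
  have h : AnalyticAt ℂ (fun w : ℂ => (1 - Complex.exp (w * Complex.I)) / 2) (φ : ℂ) := by fun_prop
  exact h.restrictScalars.comp (Complex.ofRealCLM.analyticAt φ)

lemma hypHalf_mul_hypHalf_halfChord {φ : ℝ} (hφ : φ ∈ Set.Ioo (-(Real.pi / 2)) (Real.pi / 2)) :
    hypHalf (halfChord φ) * hypHalf (halfChord (-φ)) = fourF3 ((Real.sin φ : ℂ) ^ 2) := by
  have hE {ψ : ℝ} (h : 0 < Real.cos ψ) : AnalyticAt ℝ (fun ψ => hypHalf (halfChord ψ)) ψ :=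
    ((analyticAt_tsum_coeff_mul_pow (fun n => sq_nonneg _) halfCoeff_sq_le_one
      (norm_halfChord_lt_one h)).restrictScalars (𝕜 := ℝ)).comp (analyticAt_halfChord ψ)
  have hL : AnalyticOnNhd ℝ (fun ψ : ℝ => hypHalf (halfChord ψ) * hypHalf (halfChord (-ψ)))
      (Set.Ioo (-(Real.pi / 2)) (Real.pi / 2)) := by
    intro ψ hψ
    have hc := Real.cos_pos_of_mem_Ioo hψ
    have h2 : AnalyticAt ℝ (fun ψ => hypHalf (halfChord ψ)) (-ψ) := hE (by rwa [Real.cos_neg])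
    exact (hE hc).mul (h2.comp (f := fun ψ : ℝ => -ψ) (by fun_prop))
  have hR : AnalyticOnNhd ℝ (fun ψ : ℝ => fourF3 ((Real.sin ψ : ℂ) ^ 2))
      (Set.Ioo (-(Real.pi / 2)) (Real.pi / 2)) := by
    intro ψ hψ
    have hc := Real.cos_pos_of_mem_Ioo hψ
    have h1 : ‖(Real.sin ψ : ℂ) ^ 2‖ < 1 := by
      rw [norm_pow, Complex.norm_real, Real.norm_eq_abs, sq_abs]
      nlinarith [Real.sin_sq_add_cos_sq ψ]
    have h2 : AnalyticAt ℂ fourF3 ((Real.sin ψ : ℂ) ^ 2) :=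
      analyticAt_tsum_coeff_mul_pow (fun n => mul_nonneg (sq_nonneg _) (halfCoeff_nonneg n))
        (fun n => mul_le_one₀ (halfCoeff_sq_le_one _) (halfCoeff_nonneg n) (halfCoeff_le_one n)) h1
    have h3 : AnalyticAt ℝ (fun ψ : ℝ => (Real.sin ψ : ℂ) ^ 2) ψ := by
      have h : AnalyticAt ℂ (fun w : ℂ => Complex.sin w ^ 2) (ψ : ℂ) := by fun_prop
      simpa [Function.comp_def] using!
        (h.restrictScalars (𝕜 := ℝ)).comp (Complex.ofRealCLM.analyticAt ψ)
    exact AnalyticAt.comp (f := fun ψ : ℝ => (Real.sin ψ : ℂ) ^ 2)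
      (h2.restrictScalars (𝕜 := ℝ)) h3
  have hpi := Real.pi_pos
  refine hL.eqOn_of_preconnected_of_eventuallyEq hR (convex_Ioo _ _).isPreconnected
    (z₀ := 0) ⟨by linarith, by linarith⟩ ?_ hφ
  have hc : Continuous halfChord := by unfold halfChord; fun_prop
  have h0 : halfChord 0 = 0 := by simp [halfChord]
  have h1 : ∀ᶠ ψ in nhds (0 : ℝ), ‖halfChord ψ‖ < (1 / 17) ^ 2 :=
    hc.norm.continuousAt.eventually_lt continuousAt_const (by simp [h0])
  have h2 : ∀ᶠ ψ in nhds (0 : ℝ), ‖halfChord (-ψ)‖ < (1 / 17) ^ 2 :=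
    (hc.comp continuous_neg).norm.continuousAt.eventually_lt continuousAt_const (by simp [h0])
  filter_upwards [h1, h2] with ψ h1 h2
  rw [hypHalf_mul_hypHalf_of_norm_le (by norm_num) (by norm_num) h1.le h2.le
    (halfChord_add_halfChord_neg ψ), four_mul_halfChord_mul]

lemma poch_ratio_eq (n : ℕ) :
    (poch (1/4) n)^2 * (poch (3/4) n)^2 / (poch (1/2) n * (poch 1 n)^2 * (Nat.factorial n))
      = halfCoeff (2 * n) ^ 2 * halfCoeff n := by
  induction n with
  | zero => simp [poch, halfCoeff_zero]
  | succ n ih =>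
    have e (a : ℝ) : poch a (n + 1) = poch a n * (a + n) := prod_range_succ _ _
    have s (n : ℕ) : halfCoeff (n + 1) = (n + 1 / 2) / (n + 1) * halfCoeff n := by
      have := succ_mul_halfCoeff_succ n
      field_simp
      linarith
    rw [show 2 * (n + 1) = 2 * n + 1 + 1 by ring, s, s, s]
    rw [show ∀ a b c d : ℝ, (a * (b * c)) ^ 2 * (d * halfCoeff n)
        = (a * b) ^ 2 * d * (c ^ 2 * halfCoeff n) by intros; ring, ← ih, e, e, e, e,
      Nat.factorial_succ]
    push_cast
    field_simp
    ring

theorem fourF3_elliptic_K_product (z : ℝ) (hz0 : 0 < z) (hz1 : z < 1) :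
    ((∑' n : ℕ,
        (poch (1/4) n)^2 * (poch (3/4) n)^2
          / (poch (1/2) n * (poch 1 n)^2 * (Nat.factorial n)) * z ^ n : ℝ) : ℂ) =
      4 / (Real.pi : ℂ)^2
        * ellK (1/2 - 1 / (2 * ((1 - 2*(z:ℂ) - 2*((z:ℂ)^2 - z) ^ ((1/2 : ℂ))) ^ ((1/2 : ℂ)))))
        * ellK (1/2 - ((1 - 2*(z:ℂ) - 2*((z:ℂ)^2 - z) ^ ((1/2 : ℂ))) ^ ((1/2 : ℂ))) / 2) := by
  obtain ⟨φ, hφ, hs, hz⟩ : ∃ φ ∈ Set.Ioo (-(Real.pi / 2)) (Real.pi / 2),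
      0 < Real.sin φ ∧ Real.sin φ ^ 2 = z := by
    have h0 := Real.sqrt_pos.2 hz0
    have h1 : √z < 1 := by rw [Real.sqrt_lt' one_pos]; linarith
    have h : Real.sin (Real.arcsin √z) = √z := Real.sin_arcsin (by linarith) h1.le
    exact ⟨_, ⟨Real.neg_pi_div_two_lt_arcsin.2 (by linarith), Real.arcsin_lt_pi_div_two.2 h1⟩,
      by rwa [h], by rw [h, Real.sq_sqrt hz0.le]⟩
  have hc := Real.cos_pos_of_mem_Ioo hφ
  have hsc := Complex.sin_sq_add_cos_sq (φ : ℂ)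
  have hexp : Complex.exp ((-φ : ℝ) * Complex.I) = Complex.cos φ - Complex.sin φ * Complex.I := by
    rw [Complex.exp_mul_I]; push_cast; rw [Complex.cos_neg, Complex.sin_neg]; ring
  have hroot : ((z : ℂ) ^ 2 - z) ^ (1 / 2 : ℂ) = Complex.sin φ * Complex.cos φ * Complex.I := by
    have e : (z : ℂ) ^ 2 - z = (Complex.sin φ * Complex.cos φ * Complex.I) ^ 2 := by
      rw [← hz]; push_cast
      rw [mul_pow _ Complex.I, Complex.I_sq]
      linear_combination Complex.sin φ ^ 2 * hsc
    have e2 : Complex.sin φ * Complex.cos φ * Complex.I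
      = ((Real.sin φ * Real.cos φ : ℝ) : ℂ) * Complex.I := by push_cast; ring
    rw [e, one_div, e2]
    have ha : (((Real.sin φ * Real.cos φ : ℝ) : ℂ) * Complex.I).arg = Real.pi / 2 := by
      rw [Complex.arg_real_mul _ (mul_pos hs hc), Complex.arg_I]
    exact_mod_cast Complex.pow_cpow_nat_inv two_ne_zero (by rw [ha]; push_cast; linarith [Real.pi_pos])
      (by rw [ha]; push_cast; linarith [Real.pi_pos])
  have hw : (1 - 2*(z:ℂ) - 2*((z:ℂ)^2 - z) ^ ((1/2 : ℂ))) ^ ((1/2 : ℂ))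
      = Complex.exp ((-φ : ℝ) * Complex.I) := by
    have e : 1 - 2 * (z : ℂ) - 2 * ((z : ℂ) ^ 2 - z) ^ (1 / 2 : ℂ)
        = Complex.exp ((-φ : ℝ) * Complex.I) ^ 2 := by
      rw [hroot, hexp, ← hz]
      push_cast
      linear_combination -hsc - Complex.sin φ ^ 2 * Complex.I_sq
    rw [e, one_div]
    exact Complex.sq_cpow_two_inv (by rw [Complex.exp_ofReal_mul_I_re, Real.cos_neg]; exact hc)
  have hm1 : 1 / 2 - 1 / (2 * Complex.exp ((-φ : ℝ) * Complex.I)) = halfChord φ := by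
    have h := exp_mul_exp_neg φ
    have h0 := Complex.exp_ne_zero ((-φ : ℝ) * Complex.I)
    rw [halfChord]
    have h1 : 1 / Complex.exp ((-φ : ℝ) * Complex.I) = Complex.exp (φ * Complex.I) :=
      (eq_div_of_mul_eq h0 h).symm
    rw [← div_div, div_right_comm, h1]
    ring
  have hm2 : 1 / 2 - Complex.exp ((-φ : ℝ) * Complex.I) / 2 = halfChord (-φ) := by
    rw [halfChord]; ring
  rw [hw, hm1, hm2, ellK_eq_hypHalf (norm_halfChord_lt_one hc),
    ellK_eq_hypHalf (norm_halfChord_lt_one (by rwa [Real.cos_neg]))]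
  have hpi : (Real.pi : ℂ) ≠ 0 := by exact_mod_cast Real.pi_ne_zero
  have hfin := hypHalf_mul_hypHalf_halfChord hφ
  rw [show ∀ a b : ℂ, 4 / (Real.pi : ℂ) ^ 2 * (Real.pi / 2 * a) * (Real.pi / 2 * b) = a * b by
    intro a b; field_simp; ring, hfin, fourF3, Complex.ofReal_tsum]
  refine tsum_congr fun n => ?_
  rw [poch_ratio_eq, ← hz]
  push_cast
  rfl
end

section
/- ∑_{n=0}^∞ ((1/2)ₙ)³ (1)ₙ/((3/4)ₙ(5/4)ₙ((3/2)ₙ)²) · (1/16)ⁿ · (1)ₙ/n! = 8·Li₄((√5−1)/2) − (1/2)·Li₄((3−√5)/2) + 4·Li₃((√5−1)/2)·log((√5+1)/2) − 4·Li₃((1−√5)/2)·log((√5+1)/2) − 47π⁴/648 − (3/2)·log⁴((√5+1)/2) + (π²/3)·log²((√5+1)/2). -/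
/-- Trilogarithm `Li₃(x) = ∑_{k ≥ 1} x^k / k³`. -/
noncomputable def Li3 (x : ℝ) : ℝ := ∑' k : ℕ, x ^ (k + 1) / ((k : ℝ) + 1)^3

/-- Tetralogarithm `Li₄(x) = ∑_{k ≥ 1} x^k / k⁴`. -/
noncomputable def Li4 (x : ℝ) : ℝ := ∑' k : ℕ, x ^ (k + 1) / ((k : ℝ) + 1)^4

open Filter Topology

/-- The sum of the power series with coefficients `a`. -/
noncomputable def powSum (a : ℕ → ℝ) (x : ℝ) : ℝ := ∑' n : ℕ, a n * x ^ n

/-- The power series with coefficients `a` converges absolutely on `(-R, R)`. -/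
def ConvOn (a : ℕ → ℝ) (R : ℝ) : Prop :=
  ∀ r, 0 ≤ r → r < R → Summable fun n : ℕ => |a n| * r ^ n

/-- Coefficients of the derivative of a power series. -/
def derivCoeff (a : ℕ → ℝ) (n : ℕ) : ℝ := (n + 1) * a (n + 1)

lemma ConvOn.summable {a : ℕ → ℝ} {R x : ℝ} (ha : ConvOn a R) (hx : |x| < R) :
    Summable fun n : ℕ => a n * x ^ n := by
  refine Summable.of_norm ?_
  simpa [abs_mul, abs_pow] using ha |x| (abs_nonneg x) hx

lemma ConvOn.mono {a b : ℕ → ℝ} {R : ℝ} (hb : ConvOn b R) (h : ∀ n, |a n| ≤ |b n|) :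
    ConvOn a R := fun r h0 h1 =>
  Summable.of_nonneg_of_le (fun n => by positivity)
    (fun n => mul_le_mul_of_nonneg_right (h n) (by positivity)) (hb r h0 h1)

lemma ConvOn.conv_deriv {a : ℕ → ℝ} {R : ℝ} (ha : ConvOn a R) : ConvOn (derivCoeff a) R := by
  intro r h0 h1
  obtain ⟨q, hrq, hqR⟩ := exists_between h1
  have hq : 0 < q := h0.trans_lt hrq
  have hs := ha q hq.le hqR
  have hgeo : Summable fun n : ℕ => ((n : ℝ) + 1) * (r / q) ^ n := by
    have hn : ‖r / q‖ < 1 := by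
      rw [Real.norm_of_nonneg (by positivity)]
      exact (div_lt_one hq).2 hrq
    have h1 := summable_pow_mul_geometric_of_norm_lt_one 1 hn
    have h2 := summable_pow_mul_geometric_of_norm_lt_one 0 hn
    refine (h1.add h2).congr fun n => ?_
    ring
  refine Summable.of_nonneg_of_le (fun n => by positivity) (fun n => ?_)
    (hgeo.mul_left ((∑' n : ℕ, |a n| * q ^ n) / q))
  have hle : |a (n + 1)| * q ^ (n + 1) ≤ ∑' n : ℕ, |a n| * q ^ n :=
    hs.le_tsum (n + 1) fun j _ => by positivity
  have hle' : |a (n + 1)| ≤ (∑' n : ℕ, |a n| * q ^ n) / q ^ (n + 1) :=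
    (le_div_iff₀ (by positivity)).2 hle
  calc |derivCoeff a n| * r ^ n = ((n : ℝ) + 1) * |a (n + 1)| * r ^ n := by
        rw [derivCoeff, abs_mul, abs_of_nonneg (by positivity : (0 : ℝ) ≤ (n : ℝ) + 1)]
    _ ≤ ((n : ℝ) + 1) * ((∑' n : ℕ, |a n| * q ^ n) / q ^ (n + 1)) * r ^ n := by gcongr
    _ = _ := by
        rw [div_pow, pow_succ]
        field_simp

lemma ConvOn.nat_mul {a : ℕ → ℝ} {R : ℝ} (ha : ConvOn a R) :
    ConvOn (fun n => n * a n) R := by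
  intro r h0 h1
  refine (summable_nat_add_iff 1).1 (((ha.conv_deriv r h0 h1).mul_left r).congr fun n => ?_)
  simp only [derivCoeff, pow_succ]
  push_cast
  ring

lemma ConvOn.powSum_mul_derivCoeff {a : ℕ → ℝ} {R x : ℝ} (ha : ConvOn a R) (hx : |x| < R) :
    x * powSum (derivCoeff a) x = powSum (fun n => n * a n) x := by
  rw [powSum, powSum, (ha.nat_mul.summable hx).tsum_eq_zero_add, ← tsum_mul_left]
  simp only [derivCoeff, pow_succ]
  push_cast
  simp only [zero_mul, zero_add]
  exact tsum_congr fun n => by ring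

lemma ConvOn.hasDerivAt {a : ℕ → ℝ} {R x : ℝ} (ha : ConvOn a R) (hx : |x| < R) :
    HasDerivAt (powSum a) (powSum (derivCoeff a) x) x := by
  obtain ⟨r, hxr, hrR⟩ := exists_between hx
  have hr : 0 < r := (abs_nonneg x).trans_lt hxr
  have hsum : Summable fun n : ℕ => |a n| * (n * r ^ (n - 1)) := by
    refine (summable_nat_add_iff 1).1 ((ha.conv_deriv r hr.le hrR).congr fun n => ?_)
    rw [derivCoeff, abs_mul, abs_of_nonneg (by positivity : (0 : ℝ) ≤ (n : ℝ) + 1)]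
    push_cast [Nat.add_sub_cancel]
    ring
  have hmain := hasDerivAt_tsum_of_isPreconnected (g := fun n y => a n * y ^ n)
    (g' := fun n y => a n * (n * y ^ (n - 1))) (t := Set.Ioo (-r) r) (y₀ := x) (y := x) hsum
    isOpen_Ioo isPreconnected_Ioo
    (fun n y _ => (hasDerivAt_pow n y).const_mul (a n))
    (fun n y hy => by
      rw [norm_mul, norm_mul, norm_pow, Real.norm_eq_abs, Real.norm_eq_abs, Real.norm_eq_abs,
        Nat.abs_cast]
      have : |y| ≤ r := (abs_lt.2 hy).le
      gcongr)
    (abs_lt.1 hxr) (ha.summable hx) (abs_lt.1 hxr)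
  refine hmain.congr_deriv ?_
  have hsx : Summable fun n : ℕ => a n * (n * x ^ (n - 1)) := by
    refine (summable_nat_add_iff 1).1 ((ha.conv_deriv.summable hx).congr fun n => ?_)
    simp only [derivCoeff, Nat.add_sub_cancel]
    push_cast
    ring
  rw [hsx.tsum_eq_zero_add, powSum]
  simp only [derivCoeff, Nat.add_sub_cancel]
  push_cast
  simp only [zero_mul, mul_zero, zero_add]
  exact tsum_congr fun n => by ring

lemma ConvOn.hasDerivAt_div {a : ℕ → ℝ} {R x : ℝ} (ha : ConvOn a R) (hx : |x| < R)
    (h0 : x ≠ 0) : HasDerivAt (powSum a) (powSum (fun n => n * a n) x / x) x := by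
  refine (ha.hasDerivAt hx).congr_deriv ?_
  rw [← ha.powSum_mul_derivCoeff hx]
  field_simp

lemma powSum_zero (a : ℕ → ℝ) : powSum a 0 = a 0 := by
  rw [powSum, tsum_eq_single 0 fun n hn => by simp [hn]]
  simp

/-- The differential operator `(4s - s²) ∂² + (2 - s) ∂` acts diagonally up to a shift. -/
lemma ConvOn.second_order {a : ℕ → ℝ} {R s : ℝ} (ha : ConvOn a R) (hs : |s| < R) :
    (4 * s - s ^ 2) * powSum (derivCoeff (derivCoeff a)) s
      + (2 - s) * powSum (derivCoeff a) s
      = powSum (fun n => (n + 1) * (4 * n + 2) * a (n + 1) - n ^ 2 * a n) s := by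
  have h1 : s * powSum (derivCoeff (derivCoeff a)) s
      = powSum (fun n => n * derivCoeff a n) s := ha.conv_deriv.powSum_mul_derivCoeff hs
  have h2 : s * powSum (derivCoeff a) s = powSum (fun n => n * a n) s :=
    ha.powSum_mul_derivCoeff hs
  have h3 : s * powSum (derivCoeff fun n => n * a n) s
      = powSum (fun n => n * (n * a n)) s := ha.nat_mul.powSum_mul_derivCoeff hs
  have h4 : powSum (derivCoeff fun n => n * a n) s
      = powSum (fun n => n * derivCoeff a n) s + powSum (derivCoeff a) s := by
    rw [powSum, powSum, powSum, ← (ha.conv_deriv.nat_mul.summable hs).tsum_add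
      (ha.conv_deriv.summable hs)]
    refine tsum_congr fun n => ?_
    simp only [derivCoeff]
    push_cast
    ring
  have h5 : powSum (fun n => (n + 1) * (4 * n + 2) * a (n + 1) - n ^ 2 * a n) s
      = 4 * powSum (fun n => n * derivCoeff a n) s + 2 * powSum (derivCoeff a) s
        - powSum (fun n => n * (n * a n)) s := by
    rw [powSum, powSum, powSum, powSum, ← tsum_mul_left, ← tsum_mul_left,
      ← ((ha.conv_deriv.nat_mul.summable hs).mul_left 4).tsum_add
        ((ha.conv_deriv.summable hs).mul_left 2),
      ← ((((ha.conv_deriv.nat_mul.summable hs).mul_left 4)).add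
        ((ha.conv_deriv.summable hs).mul_left 2)).tsum_sub (ha.nat_mul.nat_mul.summable hs)]
    refine tsum_congr fun n => ?_
    simp only [derivCoeff]
    ring
  rw [h5]
  linear_combination (4 - s) * h1 - h3 + s * h4

lemma eqOn_of_hasDerivAt_zero {F : ℝ → ℝ} {a b : ℝ} (hd : ∀ y ∈ Set.Ioo a b, HasDerivAt F 0 y)
    {x y : ℝ} (hx : x ∈ Set.Ioo a b) (hy : y ∈ Set.Ioo a b) : F x = F y :=
  isOpen_Ioo.is_const_of_deriv_eq_zero isPreconnected_Ioo
    (fun z hz => (hd z hz).differentiableAt.differentiableWithinAt)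
    (fun z hz => (hd z hz).deriv) hx hy

lemma eq_of_hasDerivAt_zero_of_tendsto_left {F : ℝ → ℝ} {a b c x : ℝ}
    (hd : ∀ y ∈ Set.Ioo a b, HasDerivAt F 0 y) (ht : Tendsto F (𝓝[>] a) (𝓝 c))
    (hx : x ∈ Set.Ioo a b) : F x = c := by
  refine tendsto_nhds_unique (tendsto_const_nhds.congr' ?_) ht
  filter_upwards [Ioo_mem_nhdsGT (hx.1.trans hx.2)] with y hy
  exact eqOn_of_hasDerivAt_zero hd hx hy

lemma eq_of_hasDerivAt_zero_of_tendsto_right {F : ℝ → ℝ} {a b c x : ℝ}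
    (hd : ∀ y ∈ Set.Ioo a b, HasDerivAt F 0 y) (ht : Tendsto F (𝓝[<] b) (𝓝 c))
    (hx : x ∈ Set.Ioo a b) : F x = c := by
  refine tendsto_nhds_unique (tendsto_const_nhds.congr' ?_) ht
  filter_upwards [Ioo_mem_nhdsLT (hx.1.trans hx.2)] with y hy
  exact eqOn_of_hasDerivAt_zero hd hx hy

/-- The polylogarithm of order `p` on `[-1, 1]`. -/
noncomputable def li (p : ℕ) (x : ℝ) : ℝ := ∑' k : ℕ, x ^ (k + 1) / ((k : ℝ) + 1) ^ p

lemma li_zero (p : ℕ) : li p 0 = 0 := by simp [li]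

lemma li_one {x : ℝ} (hx : |x| < 1) : li 1 x = -Real.log (1 - x) := by
  simpa [li] using (Real.hasSum_pow_div_log_of_abs_lt_one hx).tsum_eq

lemma convOn_li (p : ℕ) : ConvOn (fun n => 1 / (n : ℝ) ^ p) 1 := fun r h0 h1 =>
  Summable.of_nonneg_of_le (fun n => by positivity)
    (fun n => by
      have : |1 / (n : ℝ) ^ p| ≤ 1 := by
        rw [abs_of_nonneg (by positivity)]
        rcases Nat.eq_zero_or_pos n with rfl | hn
        · rcases p with _ | p <;> simp
        · have : (1 : ℝ) ≤ n := by exact_mod_cast hn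
          exact (div_le_one (by positivity)).2 (one_le_pow₀ this)
      calc |1 / (n : ℝ) ^ p| * r ^ n ≤ 1 * r ^ n := by gcongr
        _ = r ^ n := one_mul _)
    (summable_geometric_of_lt_one h0 h1)

lemma li_eq_powSum {p : ℕ} (hp : p ≠ 0) {x : ℝ} (hx : |x| < 1) :
    li p x = powSum (fun n : ℕ => 1 / (n : ℝ) ^ p) x := by
  rw [powSum, ((convOn_li p).summable hx).tsum_eq_zero_add, li]
  push_cast
  rw [zero_pow hp, div_zero, zero_mul, zero_add]
  exact tsum_congr fun n => by ring

lemma hasDerivAt_li {p : ℕ} (hp : p ≠ 0) {x : ℝ} (hx : |x| < 1) (h0 : x ≠ 0) :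
    HasDerivAt (li (p + 1)) (li p x / x) x := by
  have h := (convOn_li (p + 1)).hasDerivAt_div hx h0
  have he : (fun n : ℕ => (n : ℝ) * (1 / (n : ℝ) ^ (p + 1))) = fun n : ℕ => 1 / (n : ℝ) ^ p := by
    ext n
    rcases eq_or_ne (n : ℝ) 0 with hn | hn
    · simp [hn, hp]
    · field_simp
      ring
  rw [he, ← li_eq_powSum hp hx] at h
  refine h.congr_of_eventuallyEq ?_
  filter_upwards [isOpen_Ioo.mem_nhds (abs_lt.1 hx)] with y hy
  exact li_eq_powSum p.succ_ne_zero (abs_lt.2 hy)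

lemma HasDerivAt.li {p : ℕ} (hp : p ≠ 0) {g : ℝ → ℝ} {g' x : ℝ} (hg : HasDerivAt g g' x)
    (hx : |g x| < 1) (h0 : g x ≠ 0) :
    HasDerivAt (fun y => li (p + 1) (g y)) (_root_.li p (g x) / g x * g') x :=
  (hasDerivAt_li hp hx h0).comp x hg

lemma summable_li {p : ℕ} (hp : 2 ≤ p) : Summable fun k : ℕ => 1 / ((k : ℝ) + 1) ^ p := by
  have := (summable_nat_add_iff 1).2 (Real.summable_one_div_nat_pow.2 hp)
  simpa using this

lemma abs_li_term_le (p : ℕ) {x : ℝ} (hx : |x| ≤ 1) (k : ℕ) :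
    ‖x ^ (k + 1) / ((k : ℝ) + 1) ^ p‖ ≤ 1 / ((k : ℝ) + 1) ^ p := by
  rw [norm_div, norm_pow, Real.norm_eq_abs, Real.norm_of_nonneg (by positivity)]
  gcongr
  exact pow_le_one₀ (abs_nonneg x) hx

lemma continuousOn_li {p : ℕ} (hp : 2 ≤ p) : ContinuousOn (li p) {x | |x| ≤ 1} :=
  continuousOn_tsum (fun k => by fun_prop) (summable_li hp) fun k _ hx => abs_li_term_le p hx k

lemma tendsto_li {p : ℕ} (hp : 2 ≤ p) {l : Filter ℝ} {g : ℝ → ℝ} {y : ℝ}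
    (hg : Tendsto g l (𝓝 y)) (hy : |y| ≤ 1) (hl : ∀ᶠ x in l, |g x| ≤ 1) :
    Tendsto (fun x => li p (g x)) l (𝓝 (li p y)) :=
  (continuousOn_li hp y hy).tendsto.comp (tendsto_nhdsWithin_iff.2 ⟨hg, hl⟩)

lemma li_duplication {p : ℕ} (hp : 2 ≤ p) {x : ℝ} (hx : |x| ≤ 1) :
    2 ^ (p - 1) * (li p x + li p (-x)) = li p (x ^ 2) := by
  have hs : ∀ y : ℝ, |y| ≤ 1 → Summable fun k : ℕ => y ^ (k + 1) / ((k : ℝ) + 1) ^ p :=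
    fun y hy => (summable_li hp).of_norm_bounded (abs_li_term_le p hy)
  have hx' : |-x| ≤ 1 := by rwa [abs_neg]
  have hsum := (hs x hx).add (hs _ hx')
  obtain ⟨q, rfl⟩ : ∃ q, p = q + 1 := ⟨p - 1, by omega⟩
  let f : ℕ → ℝ := fun k =>
    x ^ (k + 1) / ((k : ℝ) + 1) ^ (q + 1) + (-x) ^ (k + 1) / ((k : ℝ) + 1) ^ (q + 1)
  have hf : Summable f := hsum
  have hadd : li (q + 1) x + li (q + 1) (-x) = ∑' k, f k := ((hs x hx).tsum_add (hs _ hx')).symm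
  have he : Summable fun k => f (2 * k) :=
    hf.comp_injective (mul_right_injective₀ (two_ne_zero' ℕ))
  have ho : Summable fun k => f (2 * k + 1) :=
    hf.comp_injective (i := fun k : ℕ => 2 * k + 1) fun a b h => by simpa using h
  rw [hadd, ← tsum_even_add_odd he ho]
  have h0 : ∀ k : ℕ, f (2 * k) = 0 := fun k => by
    simp only [f]
    rw [Odd.neg_pow ⟨k, rfl⟩]
    ring
  simp only [h0, tsum_zero, zero_add]
  rw [li, ← tsum_mul_left]
  refine tsum_congr fun k => ?_
  have h1 : (((2 * k + 1 : ℕ) : ℝ) + 1) = 2 * ((k : ℝ) + 1) := by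
    push_cast
    ring
  simp only [f]
  rw [h1, show 2 * k + 1 + 1 = 2 * (k + 1) by ring, pow_mul, pow_mul, neg_sq, mul_pow,
    Nat.add_sub_cancel, pow_succ (2 : ℝ) q]
  field_simp
  ring

lemma li_two_one : li 2 1 = Real.pi ^ 2 / 6 := by
  rw [← hasSum_zeta_two.tsum_eq, hasSum_zeta_two.summable.tsum_eq_zero_add]
  simp [li]

lemma li_four_one : li 4 1 = Real.pi ^ 4 / 90 := by
  rw [← hasSum_zeta_four.tsum_eq, hasSum_zeta_four.summable.tsum_eq_zero_add]
  simp [li]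

lemma li_four_neg_one : li 4 (-1) = -(7 / 8) * (Real.pi ^ 4 / 90) := by
  have h := li_duplication (p := 4) (x := 1) (by norm_num) (by simp)
  norm_num [li_four_one] at h
  linarith

lemma hasDerivAt_log_one_sub {v : ℝ} (hv : v < 1) :
    HasDerivAt (fun y => Real.log (1 - y)) (-1 / (1 - v)) v :=
  ((hasDerivAt_id v).const_sub 1).log (sub_pos.2 hv).ne'

lemma hasDerivAt_li_self {p : ℕ} (hp : p ≠ 0) {v : ℝ} (h0 : 0 < v) (h1 : v < 1) :
    HasDerivAt (fun y => li (p + 1) y) (li p v / v) v :=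
  hasDerivAt_li hp (by rwa [abs_of_pos h0]) h0.ne'

lemma hasDerivAt_li_one_sub {p : ℕ} (hp : p ≠ 0) {v : ℝ} (h0 : 0 < v) (h1 : v < 1) :
    HasDerivAt (fun y => li (p + 1) (1 - y)) (-li p (1 - v) / (1 - v)) v := by
  refine (((hasDerivAt_id v).const_sub 1).li hp ?_ ?_).congr_deriv ?_
  · rw [id, abs_of_pos] <;> linarith
  · exact (sub_pos.2 h1).ne'
  · simp only [id]
    ring

lemma abs_landen_lt {v : ℝ} (h0 : 0 < v) (h1 : v < 1 / 2) : |v / (v - 1)| < 1 := by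
  rw [abs_div, abs_of_pos h0, abs_of_neg (by linarith), div_lt_one] <;> linarith

lemma hasDerivAt_li_landen {p : ℕ} (hp : p ≠ 0) {v : ℝ} (h0 : 0 < v) (h1 : v < 1 / 2) :
    HasDerivAt (fun y => li (p + 1) (y / (y - 1)))
      (li p (v / (v - 1)) * (1 / v + 1 / (1 - v))) v := by
  have h2 : v - 1 ≠ 0 := by linarith
  have h3 : 1 - v ≠ 0 := by linarith
  refine (((hasDerivAt_id v).div ((hasDerivAt_id v).sub_const 1) h2).li hp ?_ ?_).congr_deriv ?_
  · exact abs_landen_lt h0 h1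
  · exact div_ne_zero h0.ne' h2
  · simp only [id, Pi.div_apply]
    generalize li p (v / (v - 1)) = L
    have h4 : v ≠ 0 := h0.ne'
    field_simp
    ring

lemma tendsto_log_mul_log_one_sub :
    Tendsto (fun v => Real.log v * Real.log (1 - v)) (𝓝[>] 0) (𝓝 0) := by
  have hlim : Tendsto (fun v : ℝ => -(v * Real.log v) / (1 - v)) (𝓝[>] 0) (𝓝 0) := by
    have hc : ContinuousAt (fun v : ℝ => -(v * Real.log v) / (1 - v)) 0 :=
      Real.continuous_mul_log.neg.continuousAt.div (by fun_prop) (by norm_num)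
    simpa using tendsto_nhdsWithin_of_tendsto_nhds (s := Set.Ioi 0) hc.tendsto
  refine squeeze_zero' ?_ ?_ hlim
  · filter_upwards [Ioo_mem_nhdsGT (zero_lt_one' ℝ)] with v hv
    exact mul_nonneg_of_nonpos_of_nonpos (Real.log_nonpos hv.1.le hv.2.le)
      (Real.log_nonpos (by linarith [hv.2]) (by linarith [hv.1]))
  · filter_upwards [Ioo_mem_nhdsGT (zero_lt_one' ℝ)] with v hv
    have h1 : 0 < 1 - v := by linarith [hv.2]
    have h2 := Real.one_sub_inv_le_log_of_pos h1
    have h3 := Real.log_nonpos hv.1.le hv.2.le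
    calc Real.log v * Real.log (1 - v) ≤ Real.log v * (1 - (1 - v)⁻¹) :=
          mul_le_mul_of_nonpos_left h2 h3
      _ = -(v * Real.log v) / (1 - v) := by
          field_simp
          ring

lemma tendsto_one_sub_nhdsLT_one : Tendsto (fun v : ℝ => 1 - v) (𝓝[<] 1) (𝓝[>] 0) := by
  refine tendsto_nhdsWithin_iff.2 ⟨?_, ?_⟩
  · have hc : Continuous fun v : ℝ => 1 - v := by fun_prop
    simpa using tendsto_nhdsWithin_of_tendsto_nhds (s := Set.Iio 1) (hc.tendsto 1)
  · filter_upwards [self_mem_nhdsWithin] with v hv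
    exact sub_pos.2 (Set.mem_Iio.1 hv)

lemma tendsto_log_mul_log_one_sub' :
    Tendsto (fun v => Real.log v * Real.log (1 - v)) (𝓝[<] 1) (𝓝 0) := by
  refine (tendsto_log_mul_log_one_sub.comp tendsto_one_sub_nhdsLT_one).congr fun v => ?_
  simp [mul_comm]

lemma tendsto_li_self_zero {p : ℕ} (hp : 2 ≤ p) : Tendsto (fun v => li p v) (𝓝[>] 0) (𝓝 0) := by
  have h := tendsto_li hp (l := 𝓝[>] 0) (g := fun v => v) (y := 0)
    (tendsto_nhdsWithin_of_tendsto_nhds tendsto_id) (by simp) (by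
      filter_upwards [Ioo_mem_nhdsGT (zero_lt_one' ℝ)] with v hv
      exact abs_le.2 ⟨by linarith [hv.1], hv.2.le⟩)
  rwa [li_zero] at h

lemma tendsto_li_one_sub_zero {p : ℕ} (hp : 2 ≤ p) :
    Tendsto (fun v => li p (1 - v)) (𝓝[>] 0) (𝓝 (li p 1)) := by
  have hc : Continuous fun v : ℝ => 1 - v := by fun_prop
  refine tendsto_li hp ?_ (by simp) ?_
  · simpa using tendsto_nhdsWithin_of_tendsto_nhds (s := Set.Ioi 0) (hc.tendsto 0)
  · filter_upwards [Ioo_mem_nhdsGT (zero_lt_one' ℝ)] with v hv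
    exact abs_le.2 ⟨by linarith [hv.2], by linarith [hv.1]⟩

lemma tendsto_li_landen_zero {p : ℕ} (hp : 2 ≤ p) :
    Tendsto (fun v => li p (v / (v - 1))) (𝓝[>] 0) (𝓝 0) := by
  have hc : ContinuousAt (fun v : ℝ => v / (v - 1)) 0 :=
    continuousAt_id.div (by fun_prop) (by norm_num)
  have h := tendsto_li hp (l := 𝓝[>] 0) (g := fun v => v / (v - 1)) (y := 0)
    (by simpa using tendsto_nhdsWithin_of_tendsto_nhds (s := Set.Ioi 0) hc.tendsto)
    (by simp) (by
      filter_upwards [Ioo_mem_nhdsGT (by norm_num : (0 : ℝ) < 1 / 2)] with v hv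
      exact (abs_landen_lt hv.1 hv.2).le)
  rwa [li_zero] at h

lemma tendsto_log_one_sub_zero : Tendsto (fun v => Real.log (1 - v)) (𝓝[>] 0) (𝓝 0) := by
  have hc : ContinuousAt (fun v : ℝ => Real.log (1 - v)) 0 :=
    (hasDerivAt_log_one_sub one_pos).continuousAt
  simpa using tendsto_nhdsWithin_of_tendsto_nhds (s := Set.Ioi 0) hc.tendsto

lemma li_one_self {v : ℝ} (h0 : 0 < v) (h1 : v < 1) : li 1 v = -Real.log (1 - v) :=
  li_one (by rwa [abs_of_pos h0])

lemma li_one_one_sub {v : ℝ} (h0 : 0 < v) (h1 : v < 1) : li 1 (1 - v) = -Real.log v := by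
  rw [li_one (by rw [abs_of_pos] <;> linarith), sub_sub_cancel]

lemma li_one_landen {v : ℝ} (h0 : 0 < v) (h1 : v < 1 / 2) :
    li 1 (v / (v - 1)) = Real.log (1 - v) := by
  have h2 : v - 1 ≠ 0 := by linarith
  rw [li_one (abs_landen_lt h0 h1), ← Real.log_inv]
  congr 1
  rw [show 1 - v / (v - 1) = (1 - v)⁻¹ by
    have h3 : 1 - v ≠ 0 := by linarith
    field_simp
    ring, inv_inv]

/-- Euler's reflection formula for the dilogarithm. -/
lemma li_two_reflection {v : ℝ} (h0 : 0 < v) (h1 : v < 1) :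
    li 2 v + li 2 (1 - v) + Real.log v * Real.log (1 - v) = Real.pi ^ 2 / 6 := by
  refine eq_of_hasDerivAt_zero_of_tendsto_left (a := 0) (b := 1)
    (F := fun v => li 2 v + li 2 (1 - v) + Real.log v * Real.log (1 - v)) (fun y hy => ?_) ?_
    ⟨h0, h1⟩
  · refine (((hasDerivAt_li_self one_ne_zero hy.1 hy.2).add
      (hasDerivAt_li_one_sub one_ne_zero hy.1 hy.2)).add
      ((Real.hasDerivAt_log hy.1.ne').mul (hasDerivAt_log_one_sub hy.2))).congr_deriv ?_
    rw [li_one_self hy.1 hy.2, li_one_one_sub hy.1 hy.2]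
    ring
  · have h := ((tendsto_li_self_zero le_rfl).add (tendsto_li_one_sub_zero le_rfl)).add
      tendsto_log_mul_log_one_sub
    simpa [li_two_one] using h

/-- Landen's formula for the dilogarithm. -/
lemma li_two_landen {v : ℝ} (h0 : 0 < v) (h1 : v < 1 / 2) :
    li 2 v + li 2 (v / (v - 1)) + Real.log (1 - v) ^ 2 / 2 = 0 := by
  refine eq_of_hasDerivAt_zero_of_tendsto_left (a := 0) (b := 1 / 2)
    (F := fun v => li 2 v + li 2 (v / (v - 1)) + Real.log (1 - v) ^ 2 / 2) (fun y hy => ?_) ?_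
    ⟨h0, h1⟩
  · have hy1 : y < 1 := by linarith [hy.2]
    refine (((hasDerivAt_li_self one_ne_zero hy.1 hy1).add
      (hasDerivAt_li_landen one_ne_zero hy.1 hy.2)).add
      (((hasDerivAt_log_one_sub hy1).pow 2).div_const 2)).congr_deriv ?_
    rw [li_one_self hy.1 hy1, li_one_landen hy.1 hy.2]
    push_cast
    ring
  · have h := ((tendsto_li_self_zero le_rfl).add (tendsto_li_landen_zero le_rfl)).add
      ((tendsto_log_one_sub_zero.pow 2).div_const 2)
    simpa using h

/-- Landen's formula for the trilogarithm. -/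
lemma li_three_landen {v : ℝ} (h0 : 0 < v) (h1 : v < 1 / 2) :
    li 3 v + li 3 (1 - v) + li 3 (v / (v - 1)) - Real.log (1 - v) ^ 3 / 6
      - Real.pi ^ 2 / 6 * Real.log (1 - v)
      + Real.log v * Real.log (1 - v) * Real.log (1 - v) / 2 = li 3 1 := by
  refine eq_of_hasDerivAt_zero_of_tendsto_left (a := 0) (b := 1 / 2)
    (F := fun v => li 3 v + li 3 (1 - v) + li 3 (v / (v - 1)) - Real.log (1 - v) ^ 3 / 6
      - Real.pi ^ 2 / 6 * Real.log (1 - v)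
      + Real.log v * Real.log (1 - v) * Real.log (1 - v) / 2) (fun y hy => ?_) ?_
    ⟨h0, h1⟩
  · have hy1 : y < 1 := by linarith [hy.2]
    have hL := hasDerivAt_log_one_sub hy1
    refine ((((((hasDerivAt_li_self two_ne_zero hy.1 hy1).add
      (hasDerivAt_li_one_sub two_ne_zero hy.1 hy1)).add
      (hasDerivAt_li_landen two_ne_zero hy.1 hy.2)).sub ((hL.pow 3).div_const 6)).sub
      (hL.const_mul (Real.pi ^ 2 / 6))).add
      ((((Real.hasDerivAt_log hy.1.ne').mul hL).mul hL).div_const 2)).congr_deriv ?_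
    have e1 : li 2 (1 - y) = Real.pi ^ 2 / 6 - Real.log y * Real.log (1 - y) - li 2 y := by
      linarith [li_two_reflection hy.1 hy1]
    have e2 : li 2 (y / (y - 1)) = -Real.log (1 - y) ^ 2 / 2 - li 2 y := by
      linarith [li_two_landen hy.1 hy.2]
    rw [e1, e2]
    simp only [Pi.mul_apply]
    push_cast
    ring
  · have h := (((((tendsto_li_self_zero (p := 3) (by norm_num)).add
      (tendsto_li_one_sub_zero (p := 3) (by norm_num))).add
      (tendsto_li_landen_zero (p := 3) (by norm_num))).sub
      ((tendsto_log_one_sub_zero.pow 3).div_const 6)).sub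
      (tendsto_log_one_sub_zero.const_mul (Real.pi ^ 2 / 6))).add
      ((tendsto_log_mul_log_one_sub.mul tendsto_log_one_sub_zero).div_const 2)
    simpa using h

/-- Coefficients of the inverse central binomial series of order `p`. -/
noncomputable def cbCoeff (p n : ℕ) : ℝ := 1 / ((n : ℝ) ^ p * n.centralBinom)

lemma two_pow_le_centralBinom (n : ℕ) : 2 ^ n ≤ n.centralBinom := by
  induction n with
  | zero => simp
  | succ n ih =>
    have h := Nat.succ_mul_centralBinom_succ n
    refine Nat.le_of_mul_le_mul_left (c := n + 1) ?_ n.succ_pos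
    rw [h, pow_succ]
    nlinarith [Nat.zero_le (n * n.centralBinom)]

lemma cast_centralBinom_pos (n : ℕ) : (0 : ℝ) < n.centralBinom := by
  exact_mod_cast n.centralBinom_pos

lemma cast_centralBinom_succ (n : ℕ) :
    ((n : ℝ) + 1) * (n + 1).centralBinom = 2 * (2 * n + 1) * n.centralBinom := by
  exact_mod_cast Nat.succ_mul_centralBinom_succ n

lemma cbCoeff_nonneg (p n : ℕ) : 0 ≤ cbCoeff p n := by
  rw [cbCoeff]
  positivity

lemma convOn_cbCoeff_zero : ConvOn (cbCoeff 0) 2 := by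
  intro r h0 h1
  refine Summable.of_nonneg_of_le (fun n => by positivity) (fun n => ?_)
    (summable_geometric_of_lt_one (r := r / 2) (by positivity) (by linarith))
  have h2 : (2 : ℝ) ^ n ≤ n.centralBinom := by exact_mod_cast two_pow_le_centralBinom n
  rw [abs_of_nonneg (cbCoeff_nonneg 0 n), cbCoeff, pow_zero, one_mul, div_pow, div_mul_eq_mul_div,
    one_mul]
  gcongr

lemma cbCoeff_succ_le (p n : ℕ) : n * cbCoeff (p + 1) n ≤ cbCoeff p n := by
  rw [cbCoeff, cbCoeff]
  have hC := cast_centralBinom_pos n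
  rcases eq_or_ne (n : ℝ) 0 with hn | hn
  · rw [hn, zero_mul]
    positivity
  · refine le_of_eq ?_
    field_simp
    ring

lemma cbCoeff_le (p n : ℕ) : cbCoeff p n ≤ cbCoeff 0 n := by
  have hC := cast_centralBinom_pos n
  rw [cbCoeff, cbCoeff, pow_zero, one_mul]
  rcases Nat.eq_zero_or_pos n with rfl | hn
  · rcases p with _ | p <;> simp
  · have : (1 : ℝ) ≤ (n : ℝ) ^ p := one_le_pow₀ (by exact_mod_cast hn)
    gcongr
    nlinarith

lemma convOn_cbCoeff (p : ℕ) : ConvOn (cbCoeff p) 2 :=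
  convOn_cbCoeff_zero.mono fun n => by
    rw [abs_of_nonneg (cbCoeff_nonneg p n), abs_of_nonneg (cbCoeff_nonneg 0 n)]
    exact cbCoeff_le p n

lemma hasDerivAt_cbSum {p : ℕ} (hp : p ≠ 0) {s : ℝ} (hs : |s| < 2) (h0 : s ≠ 0) :
    HasDerivAt (powSum (cbCoeff (p + 1))) (powSum (cbCoeff p) s / s) s := by
  have h := (convOn_cbCoeff (p + 1)).hasDerivAt_div hs h0
  have he : (fun n : ℕ => (n : ℝ) * cbCoeff (p + 1) n) = cbCoeff p := by
    ext n
    rw [cbCoeff, cbCoeff]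
    rcases eq_or_ne (n : ℝ) 0 with hn | hn
    · simp [hn, hp]
    · have hC := cast_centralBinom_pos n
      field_simp
      ring
  rwa [he] at h

/-- The truncated sum `∑_{1 ≤ i < n} 1 / i²`. -/
noncomputable def harmonicSq (n : ℕ) : ℝ := ∑ i ∈ Finset.range n, 1 / (i : ℝ) ^ 2

lemma harmonicSq_nonneg (n : ℕ) : 0 ≤ harmonicSq n :=
  Finset.sum_nonneg fun i _ => by positivity

lemma harmonicSq_le (n : ℕ) : harmonicSq n ≤ n := by
  calc harmonicSq n ≤ ∑ _i ∈ Finset.range n, (1 : ℝ) := Finset.sum_le_sum fun i _ => by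
        rcases Nat.eq_zero_or_pos i with rfl | hi
        · simp
        · have : (1 : ℝ) ≤ i := by exact_mod_cast hi
          exact (div_le_one (by positivity)).2 (one_le_pow₀ this)
    _ = n := by simp

lemma convOn_harmonicSq_mul : ConvOn (fun n => harmonicSq n * cbCoeff 2 n) 2 :=
  convOn_cbCoeff_zero.mono fun n => by
    rw [abs_of_nonneg (mul_nonneg (harmonicSq_nonneg n) (cbCoeff_nonneg 2 n)),
      abs_of_nonneg (cbCoeff_nonneg 0 n)]
    exact (mul_le_mul_of_nonneg_right (harmonicSq_le n) (cbCoeff_nonneg 2 n)).trans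
      ((cbCoeff_succ_le 1 n).trans (cbCoeff_le 1 n))

lemma cbCoeff_two_succ (n : ℕ) :
    ((n : ℝ) + 1) * (4 * n + 2) * cbCoeff 2 (n + 1) = cbCoeff 0 n := by
  have hC := cast_centralBinom_pos n
  have hC' := cast_centralBinom_pos (n + 1)
  have h := cast_centralBinom_succ n
  rw [cbCoeff, cbCoeff]
  push_cast
  field_simp
  linarith

lemma second_order_cbCoeff_two {s : ℝ} :
    powSum (fun n => (n + 1) * (4 * n + 2) * cbCoeff 2 (n + 1) - n ^ 2 * cbCoeff 2 n) s = 1 := by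
  rw [powSum, tsum_eq_single 0 fun n hn => ?_]
  · simp only [cbCoeff_two_succ]
    simp [cbCoeff]
  · have hn' : (n : ℝ) ≠ 0 := by exact_mod_cast hn
    have hC := cast_centralBinom_pos n
    rw [cbCoeff_two_succ, cbCoeff, cbCoeff]
    field_simp
    simp

lemma second_order_harmonicSq_mul {s : ℝ} :
    powSum (fun n => (n + 1) * (4 * n + 2) * (harmonicSq (n + 1) * cbCoeff 2 (n + 1))
      - n ^ 2 * (harmonicSq n * cbCoeff 2 n)) s = powSum (cbCoeff 2) s := by
  congr 1
  ext n
  have h := cbCoeff_two_succ n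
  rw [show ((n : ℝ) + 1) * (4 * n + 2) * (harmonicSq (n + 1) * cbCoeff 2 (n + 1))
    = harmonicSq (n + 1) * (((n : ℝ) + 1) * (4 * n + 2) * cbCoeff 2 (n + 1)) by ring, h,
    harmonicSq, Finset.sum_range_succ, ← harmonicSq]
  rcases eq_or_ne n 0 with rfl | hn
  · simp [harmonicSq, cbCoeff]
  · have hn' : (n : ℝ) ≠ 0 := by exact_mod_cast hn
    have hC := cast_centralBinom_pos n
    rw [cbCoeff, cbCoeff]
    field_simp
    ring

lemma ConvOn.hasDerivAt_comp {a : ℕ → ℝ} {R x ds : ℝ} {s : ℝ → ℝ} (ha : ConvOn a R)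
    (hs : HasDerivAt s ds x) (hx : |s x| < R) :
    HasDerivAt (fun y => powSum a (s y)) (powSum (derivCoeff a) (s x) * ds) x :=
  (ha.hasDerivAt hx).comp x hs

lemma ConvOn.hasDerivAt_comp_mul {a : ℕ → ℝ} {R x ε : ℝ} {s s' : ℝ → ℝ} (ha : ConvOn a R)
    (hs : HasDerivAt s (s' x) x) (hs' : HasDerivAt s' (ε * (2 - s x)) x)
    (hsq : s' x ^ 2 = ε * (4 * s x - s x ^ 2)) (hx : |s x| < R) :
    HasDerivAt (fun y => powSum (derivCoeff a) (s y) * s' y)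
      (ε * powSum (fun n => (n + 1) * (4 * n + 2) * a (n + 1) - n ^ 2 * a n) (s x)) x := by
  refine ((ha.conv_deriv.hasDerivAt_comp hs hx).mul hs').congr_deriv ?_
  rw [← ha.second_order hx]
  linear_combination powSum (derivCoeff (derivCoeff a)) (s x) * hsq

lemma eq_of_second_deriv_eq {b : ℝ} {f f' g g' r : ℝ → ℝ}
    (hf : ∀ y ∈ Set.Ioo (-b) b, HasDerivAt f (f' y) y)
    (hf' : ∀ y ∈ Set.Ioo (-b) b, HasDerivAt f' (r y) y)
    (hg : ∀ y ∈ Set.Ioo (-b) b, HasDerivAt g (g' y) y)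
    (hg' : ∀ y ∈ Set.Ioo (-b) b, HasDerivAt g' (r y) y)
    (h0 : f 0 = g 0) (h0' : f' 0 = g' 0) {x : ℝ} (hx : |x| < b) : f x = g x := by
  have hb : 0 < b := (abs_nonneg x).trans_lt hx
  have hz : (0 : ℝ) ∈ Set.Ioo (-b) b := ⟨by linarith, hb⟩
  have h1 : ∀ y ∈ Set.Ioo (-b) b, f' y = g' y := fun y hy => by
    have := eqOn_of_hasDerivAt_zero (F := fun y => f' y - g' y)
      (fun z hz => ((hf' z hz).sub (hg' z hz)).congr_deriv (sub_self _)) hy hz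
    linarith
  have := eqOn_of_hasDerivAt_zero (F := fun y => f y - g y)
    (fun z hz => ((hf z hz).sub (hg z hz)).congr_deriv (by rw [h1 z hz, sub_self]))
    (abs_lt.1 hx) hz
  linarith

lemma abs_two_sub_two_cos_lt {x : ℝ} (hx : x ∈ Set.Ioo (-(Real.pi / 2)) (Real.pi / 2)) :
    |2 - 2 * Real.cos x| < 2 := by
  have h := Real.cos_pos_of_mem_Ioo hx
  have h1 := Real.cos_le_one x
  rw [abs_of_nonneg] <;> linarith

lemma hasDerivAt_two_sub_two_cos (x : ℝ) :
    HasDerivAt (fun y => 2 - 2 * Real.cos y) (2 * Real.sin x) x :=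
  (((Real.hasDerivAt_cos x).const_mul 2).const_sub 2).congr_deriv (by ring)

lemma hasDerivAt_two_sin (x : ℝ) :
    HasDerivAt (fun y => 2 * Real.sin y) (1 * (2 - (2 - 2 * Real.cos x))) x :=
  ((Real.hasDerivAt_sin x).const_mul 2).congr_deriv (by ring)

lemma two_sin_sq (x : ℝ) : (2 * Real.sin x) ^ 2
    = 1 * (4 * (2 - 2 * Real.cos x) - (2 - 2 * Real.cos x) ^ 2) := by
  linear_combination 4 * Real.sin_sq_add_cos_sq x

lemma cbSum_two_trig {x : ℝ} (hx : |x| < Real.pi / 2) :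
    powSum (cbCoeff 2) (2 - 2 * Real.cos x) = x ^ 2 / 2 := by
  refine eq_of_second_deriv_eq (f := fun x => powSum (cbCoeff 2) (2 - 2 * Real.cos x))
    (g := fun x => x ^ 2 / 2) (g' := fun x => x) (r := fun _ => 1)
    (fun y hy => (convOn_cbCoeff 2).hasDerivAt_comp (hasDerivAt_two_sub_two_cos y)
      (abs_two_sub_two_cos_lt hy))
    (fun y hy => ((convOn_cbCoeff 2).hasDerivAt_comp_mul
      (s := fun y => 2 - 2 * Real.cos y) (s' := fun y => 2 * Real.sin y)
      (hasDerivAt_two_sub_two_cos y) (hasDerivAt_two_sin y) (two_sin_sq y)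
      (abs_two_sub_two_cos_lt hy)).congr_deriv
        (by rw [second_order_cbCoeff_two, one_mul]))
    (fun y _ => ((hasDerivAt_pow 2 y).div_const 2).congr_deriv (by simp))
    (fun y _ => hasDerivAt_id y) ?_ ?_ hx
  · simp [powSum_zero, cbCoeff]
  · simp

lemma harmonicSq_trig {x : ℝ} (hx : |x| < Real.pi / 2) :
    powSum (fun n => harmonicSq n * cbCoeff 2 n) (2 - 2 * Real.cos x) = x ^ 4 / 24 := by
  refine eq_of_second_deriv_eq
    (f := fun x => powSum (fun n => harmonicSq n * cbCoeff 2 n) (2 - 2 * Real.cos x))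
    (g := fun x => x ^ 4 / 24) (g' := fun x => x ^ 3 / 6) (r := fun x => x ^ 2 / 2)
    (fun y hy => convOn_harmonicSq_mul.hasDerivAt_comp (hasDerivAt_two_sub_two_cos y)
      (abs_two_sub_two_cos_lt hy))
    (fun y hy => (convOn_harmonicSq_mul.hasDerivAt_comp_mul
      (s := fun y => 2 - 2 * Real.cos y) (s' := fun y => 2 * Real.sin y)
      (hasDerivAt_two_sub_two_cos y) (hasDerivAt_two_sin y) (two_sin_sq y)
      (abs_two_sub_two_cos_lt hy)).congr_deriv
        (by rw [second_order_harmonicSq_mul, one_mul, cbSum_two_trig (abs_lt.2 hy)]))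
    (fun y _ => ((hasDerivAt_pow 4 y).div_const 24).congr_deriv (by push_cast; ring))
    (fun y _ => ((hasDerivAt_pow 3 y).div_const 6).congr_deriv (by push_cast; ring)) ?_ ?_ hx
  · simp [powSum_zero, cbCoeff]
  · simp

lemma tsum_harmonicSq_mul_cbCoeff :
    ∑' n : ℕ, harmonicSq n * cbCoeff 2 n = Real.pi ^ 4 / 1944 := by
  have h := harmonicSq_trig (x := Real.pi / 3)
    (by rw [abs_of_pos (by positivity)]; linarith [Real.pi_pos])
  rw [Real.cos_pi_div_three, powSum] at h
  norm_num at h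
  rw [h]
  ring

lemma abs_two_sub_two_cosh_lt {x : ℝ} (hx : x ∈ Set.Ioo (-Real.log 3) (Real.log 3)) :
    |2 - 2 * Real.cosh x| < 2 := by
  have h1 := Real.one_le_cosh x
  have h2 : Real.cosh x < Real.cosh (Real.log 3) := Real.cosh_lt_cosh.2 (by
    rw [abs_of_pos (Real.log_pos (by norm_num : (1 : ℝ) < 3))]
    exact abs_lt.2 hx)
  rw [Real.cosh_log (by norm_num)] at h2
  rw [abs_of_nonpos] <;> linarith

lemma cbSum_two_hyp {x : ℝ} (hx : |x| < Real.log 3) :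
    powSum (cbCoeff 2) (2 - 2 * Real.cosh x) = -x ^ 2 / 2 := by
  have hs : ∀ y, HasDerivAt (fun y => 2 - 2 * Real.cosh y) (-2 * Real.sinh y) y := fun y =>
    (((Real.hasDerivAt_cosh y).const_mul 2).const_sub 2).congr_deriv (by ring)
  have hs' : ∀ y, HasDerivAt (fun y => -2 * Real.sinh y)
      (-1 * (2 - (2 - 2 * Real.cosh y))) y := fun y =>
    ((Real.hasDerivAt_sinh y).const_mul (-2)).congr_deriv (by ring)
  have hsq : ∀ y, (-2 * Real.sinh y) ^ 2
      = -1 * (4 * (2 - 2 * Real.cosh y) - (2 - 2 * Real.cosh y) ^ 2) := fun y => by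
    linear_combination -4 * Real.cosh_sq_sub_sinh_sq y
  refine eq_of_second_deriv_eq (f := fun x => powSum (cbCoeff 2) (2 - 2 * Real.cosh x))
    (g := fun x => -x ^ 2 / 2) (g' := fun x => -x) (r := fun _ => -1)
    (fun y hy => (convOn_cbCoeff 2).hasDerivAt_comp (hs y) (abs_two_sub_two_cosh_lt hy))
    (fun y hy => ((convOn_cbCoeff 2).hasDerivAt_comp_mul
      (s := fun y => 2 - 2 * Real.cosh y) (s' := fun y => -2 * Real.sinh y) (hs y) (hs' y) (hsq y)
      (abs_two_sub_two_cosh_lt hy)).congr_deriv (by rw [second_order_cbCoeff_two, mul_one]))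
    (fun y _ => ((hasDerivAt_pow 2 y).neg.div_const 2).congr_deriv (by push_cast; ring))
    (fun y _ => (hasDerivAt_id y).neg) ?_ ?_ hx
  · simp [powSum_zero, cbCoeff]
  · simp

/-- The rational parametrisation `v ↦ -(1 - v)² / v` of the argument. -/
noncomputable def arg (v : ℝ) : ℝ := -(1 - v) ^ 2 / v

lemma arg_eq {v : ℝ} (h0 : 0 < v) : arg v = 2 - 2 * Real.cosh (Real.log v) := by
  rw [Real.cosh_log h0, arg]
  field_simp
  ring

lemma abs_arg_lt {v : ℝ} (hv : v ∈ Set.Ioc (1 / 3) 1) : |arg v| < 2 := by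
  have h0 : 0 < v := by linarith [hv.1]
  rw [arg, neg_div, abs_neg, abs_of_nonneg (by positivity), div_lt_iff₀ h0]
  nlinarith [hv.1, hv.2]

lemma hasDerivAt_arg {v : ℝ} (hv : v ∈ Set.Ioo (1 / 3) 1) :
    HasDerivAt arg (arg v * -(1 / v + 2 / (1 - v))) v := by
  have h0 : v ≠ 0 := by linarith [hv.1]
  have h1 : 1 - v ≠ 0 := by linarith [hv.2]
  refine ((((hasDerivAt_id v).const_sub 1).pow 2).neg.div (hasDerivAt_id v) h0).congr_deriv ?_
  simp only [id, arg, Pi.neg_apply, Pi.pow_apply]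
  push_cast
  field_simp
  ring

lemma hasDerivAt_cbSum_arg {p : ℕ} (hp : p ≠ 0) {v : ℝ} (hv : v ∈ Set.Ioo (1 / 3) 1) :
    HasDerivAt (fun v => powSum (cbCoeff (p + 1)) (arg v))
      (powSum (cbCoeff p) (arg v) * -(1 / v + 2 / (1 - v))) v := by
  have h0 : 0 < v := by linarith [hv.1]
  have h1 : 0 < 1 - v := by linarith [hv.2]
  have ha : arg v ≠ 0 := by
    rw [arg, neg_div]
    exact neg_ne_zero.2 (by positivity)
  refine ((hasDerivAt_cbSum hp (abs_arg_lt ⟨hv.1, hv.2.le⟩) ha).comp v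
    (hasDerivAt_arg hv)).congr_deriv ?_
  field_simp

lemma tendsto_cbSum_arg_one {p : ℕ} (hp : p ≠ 0) :
    Tendsto (fun v => powSum (cbCoeff p) (arg v)) (𝓝[<] 1) (𝓝 0) := by
  have h1 : ContinuousAt arg 1 := by
    unfold arg
    exact ContinuousAt.div (by fun_prop) continuousAt_id one_ne_zero
  have h2 : arg 1 = 0 := by simp [arg]
  have h3 : ContinuousAt (powSum (cbCoeff p)) (arg 1) :=
    ((convOn_cbCoeff p).hasDerivAt (by simp [h2])).continuousAt
  have h4 := tendsto_nhdsWithin_of_tendsto_nhds (s := Set.Iio 1) (h3.comp h1).tendsto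
  simpa [Function.comp_def, h2, powSum_zero, cbCoeff, hp] using h4

lemma cbSum_two_arg {v : ℝ} (hv : v ∈ Set.Ioo (1 / 3) 1) :
    powSum (cbCoeff 2) (arg v) = -Real.log v ^ 2 / 2 := by
  have h0 : 0 < v := by linarith [hv.1]
  rw [arg_eq h0, cbSum_two_hyp]
  rw [abs_of_neg (Real.log_neg h0 hv.2), ← Real.log_inv]
  refine Real.log_lt_log (by positivity) ?_
  rw [inv_lt_comm₀ h0 (by norm_num)]
  linarith [hv.1]

lemma tendsto_one_sub_one_sub {f : ℝ → ℝ} {c : ℝ} (h : Tendsto f (𝓝[>] 0) (𝓝 c)) :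
    Tendsto (fun v => f (1 - v)) (𝓝[<] 1) (𝓝 c) := h.comp tendsto_one_sub_nhdsLT_one

lemma tendsto_log_one : Tendsto Real.log (𝓝[<] 1) (𝓝 0) := by
  simpa using tendsto_one_sub_one_sub tendsto_log_one_sub_zero

lemma tendsto_li_self_one {p : ℕ} (hp : 2 ≤ p) :
    Tendsto (fun v => li p v) (𝓝[<] 1) (𝓝 (li p 1)) := by
  simpa using tendsto_one_sub_one_sub (tendsto_li_one_sub_zero hp)

lemma cbSum_three_arg {v : ℝ} (hv : v ∈ Set.Ioo (1 / 3) 1) :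
    powSum (cbCoeff 3) (arg v) = Real.log v ^ 3 / 6 - Real.log v * (Real.log v * Real.log (1 - v))
      - 2 * (Real.log v * li 2 v) + 2 * li 3 v - 2 * li 3 1 := by
  have key := eq_of_hasDerivAt_zero_of_tendsto_right (a := 1 / 3) (b := 1) (c := 0)
    (F := fun v => powSum (cbCoeff 3) (arg v) - (Real.log v ^ 3 / 6
      - Real.log v * (Real.log v * Real.log (1 - v))
      - 2 * (Real.log v * li 2 v) + 2 * li 3 v - 2 * li 3 1)) (fun y hy => ?_) ?_ hv
  · linarith
  · have h0 : 0 < y := by linarith [hy.1]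
    have hl := Real.hasDerivAt_log h0.ne'
    refine ((hasDerivAt_cbSum_arg two_ne_zero hy).sub
      ((((((hl.pow 3).div_const 6).sub (hl.mul (hl.mul (hasDerivAt_log_one_sub hy.2)))).sub
      ((hl.mul (hasDerivAt_li_self one_ne_zero h0 hy.2)).const_mul 2)).add
      ((hasDerivAt_li_self two_ne_zero h0 hy.2).const_mul 2)).sub_const _)).congr_deriv ?_
    rw [cbSum_two_arg hy, li_one_self h0 hy.2]
    simp only [Pi.mul_apply]
    push_cast
    ring
  · have h := (tendsto_cbSum_arg_one (p := 3) (by norm_num)).sub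
      ((((((tendsto_log_one.pow 3).div_const 6).sub
      (tendsto_log_one.mul tendsto_log_mul_log_one_sub')).sub
      ((tendsto_log_one.mul (tendsto_li_self_one le_rfl)).const_mul 2)).add
      ((tendsto_li_self_one (p := 3) (by norm_num)).const_mul 2)).sub_const (2 * li 3 1))
    simpa using h

/-- Closed form of `-∑ (arg v)ⁿ / (n⁴ C(2n, n))` for `1/2 < v < 1`. -/
noncomputable def rightForm (v : ℝ) : ℝ :=
  5 / 24 * Real.log v ^ 4 - Real.log v ^ 2 * (Real.log v * Real.log (1 - v))
    + Real.pi ^ 2 / 3 * Real.log v ^ 2 - 2 * (Real.log v * li 3 v) + 2 * li 3 1 * Real.log v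
    + 4 * li 4 (1 - v) + 4 * li 4 ((1 - v) / (1 - v - 1)) - 4 * (Real.log v * li 3 (1 - v))

/-- Closed form, up to a constant, of `-∑ (arg v)ⁿ / (n⁴ C(2n, n))` for `1/3 < v < 1/2`. -/
noncomputable def leftForm (v : ℝ) : ℝ :=
  1 / 24 * Real.log v ^ 4 - 2 * (Real.log v * li 3 v) + 2 * li 3 1 * Real.log v
    - 1 / 3 * (Real.log v ^ 3 * Real.log (1 - v)) - Real.log v ^ 2 * Real.log (1 - v) ^ 2
    + 4 * li 4 (1 - v) - 4 * li 4 (v / (v - 1)) + 2 / 3 * (Real.log v * Real.log (1 - v) ^ 3)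
    - 1 / 6 * Real.log (1 - v) ^ 4 - Real.pi ^ 2 / 3 * Real.log (1 - v) ^ 2
    - 4 * (Real.log v * li 3 (1 - v)) + 2 * Real.pi ^ 2 / 3 * (Real.log v * Real.log (1 - v))

lemma hasDerivAt_rightForm {v : ℝ} (hv : v ∈ Set.Ioo (1 / 2) 1) :
    HasDerivAt rightForm (powSum (cbCoeff 3) (arg v) * (1 / v + 2 / (1 - v))) v := by
  have h0 : 0 < v := by linarith [hv.1]
  have hu0 : 0 < 1 - v := by linarith [hv.2]
  have hu1 : 1 - v < 1 / 2 := by linarith [hv.1]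
  have hl := Real.hasDerivAt_log h0.ne'
  have hm := hasDerivAt_log_one_sub hv.2
  have hL := (hasDerivAt_li_landen (p := 3) (by norm_num) hu0 hu1).comp v
    ((hasDerivAt_id v).const_sub 1)
  have h := (((((((((hl.pow 4).const_mul (5 / 24)).sub ((hl.pow 2).mul (hl.mul hm))).add
    ((hl.pow 2).const_mul (Real.pi ^ 2 / 3))).sub
    ((hl.mul (hasDerivAt_li_self two_ne_zero h0 hv.2)).const_mul 2)).add
    (hl.const_mul (2 * li 3 1))).add
    ((hasDerivAt_li_one_sub (p := 3) (by norm_num) h0 hv.2).const_mul 4)).add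
    (hL.const_mul 4)).sub
    ((hl.mul (hasDerivAt_li_one_sub two_ne_zero h0 hv.2)).const_mul 4))
  refine h.congr_deriv ?_
  have e1 : li 3 ((1 - v) / (1 - v - 1)) = li 3 1 - li 3 (1 - v) - li 3 v + Real.log v ^ 3 / 6
      + Real.pi ^ 2 / 6 * Real.log v - Real.log (1 - v) * Real.log v * Real.log v / 2 := by
    have := li_three_landen hu0 hu1
    rw [sub_sub_cancel] at this
    linarith
  have e2 : li 2 (1 - v) = Real.pi ^ 2 / 6 - Real.log v * Real.log (1 - v) - li 2 v := by
    linarith [li_two_reflection h0 hv.2]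
  rw [cbSum_three_arg ⟨by linarith [hv.1], hv.2⟩]
  simp only [Pi.mul_apply, Pi.pow_apply, sub_sub_cancel]
  rw [e1, e2]
  push_cast
  ring

lemma hasDerivAt_leftForm {v : ℝ} (hv : v ∈ Set.Ioo (1 / 3) (1 / 2)) :
    HasDerivAt leftForm (powSum (cbCoeff 3) (arg v) * (1 / v + 2 / (1 - v))) v := by
  have h0 : 0 < v := by linarith [hv.1]
  have h1 : v < 1 := by linarith [hv.2]
  have hl := Real.hasDerivAt_log h0.ne'
  have hm := hasDerivAt_log_one_sub h1
  have h := ((((((((((((hl.pow 4).const_mul (1 / 24)).sub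
    ((hl.mul (hasDerivAt_li_self two_ne_zero h0 h1)).const_mul 2)).add
    (hl.const_mul (2 * li 3 1))).sub
    (((hl.pow 3).mul hm).const_mul (1 / 3))).sub ((hl.pow 2).mul (hm.pow 2))).add
    ((hasDerivAt_li_one_sub (p := 3) (by norm_num) h0 h1).const_mul 4)).sub
    ((hasDerivAt_li_landen (p := 3) (by norm_num) h0 hv.2).const_mul 4)).add
    ((hl.mul (hm.pow 3)).const_mul (2 / 3))).sub ((hm.pow 4).const_mul (1 / 6))).sub
    ((hm.pow 2).const_mul (Real.pi ^ 2 / 3))).sub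
    ((hl.mul (hasDerivAt_li_one_sub two_ne_zero h0 h1)).const_mul 4)).add
    ((hl.mul hm).const_mul (2 * Real.pi ^ 2 / 3))
  refine h.congr_deriv ?_
  have e1 : li 3 (v / (v - 1)) = li 3 1 - li 3 (1 - v) - li 3 v + Real.log (1 - v) ^ 3 / 6
      + Real.pi ^ 2 / 6 * Real.log (1 - v)
      - Real.log v * Real.log (1 - v) * Real.log (1 - v) / 2 := by
    linarith [li_three_landen h0 hv.2]
  have e2 : li 2 (1 - v) = Real.pi ^ 2 / 6 - Real.log v * Real.log (1 - v) - li 2 v := by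
    linarith [li_two_reflection h0 h1]
  rw [cbSum_three_arg ⟨hv.1, h1⟩]
  simp only [Pi.pow_apply]
  rw [e1, e2]
  push_cast
  ring

lemma cbSum_four_arg_right {v : ℝ} (hv : v ∈ Set.Ioo (1 / 2) 1) :
    powSum (cbCoeff 4) (arg v) + rightForm v = 0 := by
  refine eq_of_hasDerivAt_zero_of_tendsto_right (a := 1 / 2) (b := 1)
    (F := fun v => powSum (cbCoeff 4) (arg v) + rightForm v) (fun y hy => ?_) ?_ hv
  · exact ((hasDerivAt_cbSum_arg (p := 3) (by norm_num) ⟨by linarith [hy.1], hy.2⟩).add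
      (hasDerivAt_rightForm hy)).congr_deriv (by ring)
  · have h := (tendsto_cbSum_arg_one (p := 4) (by norm_num)).add
      ((((((((tendsto_log_one.pow 4).const_mul (5 / 24)).sub
      ((tendsto_log_one.pow 2).mul tendsto_log_mul_log_one_sub')).add
      ((tendsto_log_one.pow 2).const_mul (Real.pi ^ 2 / 3))).sub
      ((tendsto_log_one.mul (tendsto_li_self_one (p := 3) (by norm_num))).const_mul 2)).add
      (tendsto_log_one.const_mul (2 * li 3 1))).add
      ((tendsto_one_sub_one_sub (tendsto_li_self_zero (p := 4) (by norm_num))).const_mul 4)).add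
      ((tendsto_one_sub_one_sub (tendsto_li_landen_zero (p := 4) (by norm_num))).const_mul 4)
      |>.sub ((tendsto_log_one.mul
        (tendsto_one_sub_one_sub (tendsto_li_self_zero (p := 3) (by norm_num)))).const_mul 4))
    simpa [rightForm] using h

lemma tendsto_li_landen_half {p : ℕ} (hp : 2 ≤ p) :
    Tendsto (fun v => li p (v / (v - 1))) (𝓝[<] (1 / 2)) (𝓝 (li p (-1))) := by
  have hc : ContinuousAt (fun v : ℝ => v / (v - 1)) (1 / 2) :=
    continuousAt_id.div (by fun_prop) (by norm_num)
  refine tendsto_li hp ?_ (by simp) ?_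
  · have h := tendsto_nhdsWithin_of_tendsto_nhds (s := Set.Iio (1 / 2)) hc.tendsto
    norm_num at h ⊢
    exact h
  · filter_upwards [Ioo_mem_nhdsLT (by norm_num : (0 : ℝ) < 1 / 2)] with v hv
    exact (abs_landen_lt hv.1 hv.2).le

lemma tendsto_one_sub_half : Tendsto (fun v : ℝ => 1 - v) (𝓝[>] (1 / 2)) (𝓝[<] (1 / 2)) := by
  refine tendsto_nhdsWithin_iff.2 ⟨?_, ?_⟩
  · have hc : Continuous fun v : ℝ => 1 - v := by fun_prop
    have h := tendsto_nhdsWithin_of_tendsto_nhds (s := Set.Ioi (1 / 2)) (hc.tendsto (1 / 2))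
    norm_num at h ⊢
    exact h
  · filter_upwards [self_mem_nhdsWithin] with v hv
    have := Set.mem_Ioi.1 hv
    exact Set.mem_Iio.2 (by linarith)

lemma cbSum_four_arg_half :
    powSum (cbCoeff 4) (arg (1 / 2)) = 19 / 24 * Real.log (1 / 2) ^ 4
      - Real.pi ^ 2 / 3 * Real.log (1 / 2) ^ 2 + 6 * (Real.log (1 / 2) * li 3 (1 / 2))
      - 2 * li 3 1 * Real.log (1 / 2) - 4 * li 4 (1 / 2) - 4 * li 4 (-1) := by
  have hh : (1 : ℝ) - 1 / 2 = 1 / 2 := by norm_num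
  have h0 : (0 : ℝ) < 1 / 2 := by norm_num
  have h1 : (1 / 2 : ℝ) < 1 := by norm_num
  have hl := (Real.hasDerivAt_log h0.ne').continuousAt.tendsto
  have hm := (hasDerivAt_log_one_sub h1).continuousAt.tendsto
  have h3 := (hasDerivAt_li_self two_ne_zero h0 h1).continuousAt.tendsto
  have h3' := (hasDerivAt_li_one_sub two_ne_zero h0 h1).continuousAt.tendsto
  have h4' := (hasDerivAt_li_one_sub (p := 3) (by norm_num) h0 h1).continuousAt.tendsto
  have hs := (hasDerivAt_cbSum_arg (p := 3) (by norm_num)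
    (by norm_num : (1 / 2 : ℝ) ∈ Set.Ioo (1 / 3) 1)).continuousAt.tendsto
  have hc := hs.add ((((((((hl.pow 4).const_mul (5 / 24)).sub ((hl.pow 2).mul (hl.mul hm))).add
    ((hl.pow 2).const_mul (Real.pi ^ 2 / 3))).sub ((hl.mul h3).const_mul 2)).add
    (hl.const_mul (2 * li 3 1))).add (h4'.const_mul 4)).sub ((hl.mul h3').const_mul 4))
  have hr := (tendsto_nhdsWithin_of_tendsto_nhds (s := Set.Ioi (1 / 2)) hc).add
    (((tendsto_li_landen_half (p := 4) (by norm_num)).comp tendsto_one_sub_half).const_mul 4)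
  have hz := tendsto_nhds_unique (hr.congr' (f₂ := fun _ => 0) ?_) tendsto_const_nhds
  · simp only [hh] at hz
    linarith
  · filter_upwards [Ioo_mem_nhdsGT h1] with v hv
    rw [← cbSum_four_arg_right hv, rightForm]
    simp only [Function.comp_apply]
    ring

lemma cbSum_four_arg_left {v : ℝ} (hv : v ∈ Set.Ioo (1 / 3) (1 / 2)) :
    powSum (cbCoeff 4) (arg v) + leftForm v = -8 * li 4 (-1) := by
  refine eq_of_hasDerivAt_zero_of_tendsto_right (a := 1 / 3) (b := 1 / 2)
    (F := fun v => powSum (cbCoeff 4) (arg v) + leftForm v) (fun y hy => ?_) ?_ hv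
  · exact ((hasDerivAt_cbSum_arg (p := 3) (by norm_num) ⟨hy.1, by linarith [hy.2]⟩).add
      (hasDerivAt_leftForm hy)).congr_deriv (by ring)
  have hh : (1 : ℝ) - 1 / 2 = 1 / 2 := by norm_num
  have h0 : (0 : ℝ) < 1 / 2 := by norm_num
  have h1 : (1 / 2 : ℝ) < 1 := by norm_num
  have hl := (Real.hasDerivAt_log h0.ne').continuousAt.tendsto
  have hm := (hasDerivAt_log_one_sub h1).continuousAt.tendsto
  have h3 := (hasDerivAt_li_self two_ne_zero h0 h1).continuousAt.tendsto
  have h3' := (hasDerivAt_li_one_sub two_ne_zero h0 h1).continuousAt.tendsto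
  have h4' := (hasDerivAt_li_one_sub (p := 3) (by norm_num) h0 h1).continuousAt.tendsto
  have hs := (hasDerivAt_cbSum_arg (p := 3) (by norm_num)
    (by norm_num : (1 / 2 : ℝ) ∈ Set.Ioo (1 / 3) 1)).continuousAt.tendsto
  have hc := hs.add ((((((((((((hl.pow 4).const_mul (1 / 24)).sub ((hl.mul h3).const_mul 2)).add
    (hl.const_mul (2 * li 3 1))).sub (((hl.pow 3).mul hm).const_mul (1 / 3))).sub
    ((hl.pow 2).mul (hm.pow 2))).add (h4'.const_mul 4)).add
    ((hl.mul (hm.pow 3)).const_mul (2 / 3))).sub ((hm.pow 4).const_mul (1 / 6))).sub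
    ((hm.pow 2).const_mul (Real.pi ^ 2 / 3))).sub ((hl.mul h3').const_mul 4)).add
    ((hl.mul hm).const_mul (2 * Real.pi ^ 2 / 3)))
  have hr := (tendsto_nhdsWithin_of_tendsto_nhds (s := Set.Iio (1 / 2)) hc).sub
    ((tendsto_li_landen_half (p := 4) (by norm_num)).const_mul 4)
  refine (hr.congr fun v => ?_).trans_eq ?_
  · rw [leftForm]
    ring
  · simp only [hh]
    rw [cbSum_four_arg_half]
    congr 1
    ring
lemma cbSum_four_neg_one :
    -powSum (cbCoeff 4) (-1) = 8 * li 4 ((Real.sqrt 5 - 1) / 2)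
      - 1 / 2 * li 4 ((3 - Real.sqrt 5) / 2)
      + 4 * li 3 ((Real.sqrt 5 - 1) / 2) * Real.log ((Real.sqrt 5 + 1) / 2)
      - 4 * li 3 ((1 - Real.sqrt 5) / 2) * Real.log ((Real.sqrt 5 + 1) / 2)
      - 7 * Real.pi ^ 4 / 90 - 3 / 2 * Real.log ((Real.sqrt 5 + 1) / 2) ^ 4
      + Real.pi ^ 2 / 3 * Real.log ((Real.sqrt 5 + 1) / 2) ^ 2 := by
  have hs : Real.sqrt 5 ^ 2 = 5 := Real.sq_sqrt (by norm_num)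
  have hs1 : (2 : ℝ) < Real.sqrt 5 := Real.lt_sqrt_of_sq_lt (by norm_num)
  have hs2 : Real.sqrt 5 < 7 / 3 := (Real.sqrt_lt' (by norm_num)).2 (by norm_num)
  set s := Real.sqrt 5
  have h0 : (3 - s) / 2 ≠ 0 := by linarith
  have harg : arg ((3 - s) / 2) = -1 := by
    rw [arg, div_eq_iff h0]
    linear_combination -1 / 4 * hs
  have e1 : 1 - (3 - s) / 2 = (s - 1) / 2 := by ring
  have e2 : (3 - s) / 2 / ((3 - s) / 2 - 1) = (1 - s) / 2 := by
    rw [div_eq_iff (by linarith)]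
    linear_combination -1 / 4 * hs
  have e3 : (s - 1) / 2 = ((s + 1) / 2)⁻¹ := by
    refine eq_inv_of_mul_eq_one_left ?_
    linear_combination 1 / 4 * hs
  have e4 : (3 - s) / 2 = ((s - 1) / 2) ^ 2 := by linear_combination -1 / 4 * hs
  have l1 : Real.log ((s - 1) / 2) = -Real.log ((s + 1) / 2) := by rw [e3, Real.log_inv]
  have l2 : Real.log ((3 - s) / 2) = -2 * Real.log ((s + 1) / 2) := by
    rw [e4, Real.log_pow, l1]
    push_cast
    ring
  have hv := cbSum_four_arg_left (v := (3 - s) / 2) ⟨by linarith, by linarith⟩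
  have hl := li_three_landen (v := (3 - s) / 2) (by linarith) (by linarith)
  have e5 : -((s - 1) / 2) = (1 - s) / 2 := by ring
  have hd := li_duplication (p := 4) (x := (s - 1) / 2) (by norm_num)
    (abs_le.2 ⟨by linarith, by linarith⟩)
  rw [leftForm, harg, e1, e2, l1, l2] at hv
  rw [e1, e2, l1, l2] at hl
  rw [← e4, e5] at hd
  linear_combination -hv + 4 * Real.log ((s + 1) / 2) * hl - 1 / 2 * hd
    + 8 * li_four_neg_one
open scoped ENNReal in
lemma tsum_tsum_split (f : ℕ → ℕ → ℝ≥0∞) :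
    ∑' a, ∑' b, f a b = ∑' a, f a a + ∑' b, ∑' a, (if b < a then f a b else 0)
      + ∑' a, ∑' b, (if a < b then f a b else 0) := by
  have h (a b : ℕ) : f a b = (if b = a then f a b else 0) + (if b < a then f a b else 0)
      + (if a < b then f a b else 0) := by
    rcases lt_trichotomy a b with h | rfl | h
    · simp [h, h.ne', h.not_gt]
    · simp
    · simp [h, h.ne, h.not_gt]
  rw [ENNReal.tsum_comm (f := fun b a => if b < a then f a b else 0), ← ENNReal.tsum_add,
    ← ENNReal.tsum_add]
  refine tsum_congr fun a => ?_
  rw [← tsum_ite_eq a (fun b => f a b), ← ENNReal.tsum_add, ← ENNReal.tsum_add]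
  exact tsum_congr fun b => h a b

open scoped ENNReal in
/-- The connected sum method: `d` connects the double sum `∑_{j < a} r j * r a` to the
diagonal sums of `d`. -/
lemma connected_sum {d e : ℕ → ℕ → ℝ≥0∞} {r : ℕ → ℝ≥0∞} (hd : ∀ a b, d a b = d b a)
    (he : ∀ a b, e a b = e b a) (hr : ∀ a, ∑' b, d a b = r a)
    (hdiag : ∀ b, ∑' a, (if b < a then d a b else 0) = d b b)
    (hde : ∀ a b, r a * ∑' m, (if a < m then d m b else 0) = e a b) :
    ∃ Q : ℝ≥0∞, ∑' a, (∑ j ∈ Finset.range a, r j) * r a = ∑' a, r a * d a a + 2 * Q ∧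
      ∑' a, (∑ j ∈ Finset.range a, r j) * r a
        = 3 * ∑' a, (∑ j ∈ Finset.range a, r j) * d a a + ∑' a, r a * d a a + Q := by
  have hH (f : ℕ → ℝ≥0∞) (a : ℕ) :
      ∑ j ∈ Finset.range a, f j = ∑' j, if j < a then f j else 0 := by
    rw [tsum_eq_sum (s := Finset.range a) fun j hj => if_neg (by simpa using hj)]
    exact Finset.sum_congr rfl fun j hj => (if_pos (Finset.mem_range.1 hj)).symm
  have hQ : ∑' b, ∑' a, (if b < a then e a b else 0)
      = ∑' a, ∑' b, (if a < b then e a b else 0) :=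
    tsum_congr fun a => tsum_congr fun b => by rw [he]
  refine ⟨∑' b, ∑' a, (if b < a then e a b else 0), ?_, ?_⟩
  · have h := tsum_tsum_split e
    rw [← hQ] at h
    have hee (a : ℕ) : e a a = r a * d a a := by rw [← hde, hdiag]
    simp only [hee] at h
    rw [two_mul, ← add_assoc, ← h]
    calc ∑' a, (∑ j ∈ Finset.range a, r j) * r a
        = ∑' a, ∑' j, r j * (if j < a then r a else 0) := by
          refine tsum_congr fun a => ?_
          rw [hH, ← ENNReal.tsum_mul_right]
          refine tsum_congr fun j => ?_
          split_ifs <;> simp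
      _ = ∑' j, r j * ∑' a, (if j < a then ∑' b, d a b else 0) := by
          rw [ENNReal.tsum_comm]
          refine tsum_congr fun j => ?_
          rw [ENNReal.tsum_mul_left]
          simp only [hr]
      _ = ∑' j, ∑' b, e j b := by
          refine tsum_congr fun j => ?_
          simp only [← hde]
          rw [ENNReal.tsum_mul_left, ENNReal.tsum_comm]
          congr 1
          refine tsum_congr fun a => ?_
          split_ifs <;> simp
  · have h1 : ∑' a, (∑ j ∈ Finset.range a, r j) * r a
        = ∑' a, ∑' b, (∑ j ∈ Finset.range a, r j) * d a b :=
      tsum_congr fun a => by rw [ENNReal.tsum_mul_left, hr]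
    have h2 : ∑' a, ∑' b, (if a < b then (∑ j ∈ Finset.range a, r j) * d a b else 0)
        = ∑' a, (∑ j ∈ Finset.range a, r j) * d a a := by
      refine tsum_congr fun a => ?_
      rw [← hdiag a, ← ENNReal.tsum_mul_left]
      refine tsum_congr fun b => ?_
      rw [hd a b]
      split_ifs <;> simp
    have h3 (b : ℕ) : ∑' a, (if b < a then (∑ j ∈ Finset.range a, r j) * d a b else 0)
        = (∑ j ∈ Finset.range b, r j) * d b b + r b * d b b
          + ∑' a, (if b < a then e a b else 0) := by
      rw [← add_mul, ← Finset.sum_range_succ]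
      have hsplit (a : ℕ) : (if b < a then (∑ j ∈ Finset.range a, r j) * d a b else 0)
          = (∑ j ∈ Finset.range (b + 1), r j) * (if b < a then d a b else 0)
            + ∑' j, if b < j then r j * (if j < a then d a b else 0) else 0 := by
        split_ifs with hab
        · rw [← Finset.sum_range_add_sum_Ico _ (Nat.succ_le_of_lt hab), add_mul]
          congr 1
          rw [tsum_eq_sum (s := Finset.Ico (b + 1) a) fun j hj => ?_, Finset.sum_mul]
          · refine Finset.sum_congr rfl fun j hj => ?_
            rw [Finset.mem_Ico] at hj
            rw [if_pos (by lia), if_pos hj.2]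
          · rw [Finset.mem_Ico] at hj
            split_ifs <;> first | rfl | lia
        · rw [mul_zero, zero_add, eq_comm, ENNReal.tsum_eq_zero]
          intro j
          split_ifs <;> first | rfl | lia
      simp only [hsplit]
      rw [ENNReal.tsum_add, ENNReal.tsum_mul_left, hdiag, ENNReal.tsum_comm]
      congr 1
      refine tsum_congr fun j => ?_
      split_ifs
      · rw [ENNReal.tsum_mul_left, hde]
      · simp
    rw [h1, tsum_tsum_split, h2]
    simp only [h3]
    rw [ENNReal.tsum_add, ENNReal.tsum_add]
    ring
/-- The connector `a! b! / (a + b + 2)!`. -/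
noncomputable def connector (a b : ℕ) : ℝ :=
  (a.factorial : ℝ) * b.factorial / (a + b + 2).factorial

lemma connector_nonneg (a b : ℕ) : 0 ≤ connector a b := by
  rw [connector]
  positivity

lemma connector_comm (a b : ℕ) : connector a b = connector b a := by
  rw [connector, connector, mul_comm, add_comm a b]

lemma connector_self (a : ℕ) : connector a a = cbCoeff 2 (a + 1) := by
  have h : (((a + 1).centralBinom : ℝ) * (a + 1).factorial) * (a + 1).factorial
      = (a + a + 2).factorial := by
    have := Nat.choose_mul_factorial_mul_factorial (show a + 1 ≤ 2 * (a + 1) by lia)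
    rw [show 2 * (a + 1) - (a + 1) = a + 1 by lia, show 2 * (a + 1) = a + a + 2 by ring] at this
    rw [Nat.centralBinom, show 2 * (a + 1) = a + a + 2 by ring]
    exact_mod_cast this
  have hC := cast_centralBinom_pos (a + 1)
  rw [connector, cbCoeff, ← h, Nat.factorial_succ]
  push_cast
  field_simp

/-- The tails `∑_{m ≥ n} connector m b`. -/
noncomputable def connectorTail (b n : ℕ) : ℝ :=
  (n.factorial : ℝ) * b.factorial / ((b + 1) * (n + b + 1).factorial)

lemma connectorTail_sub (b n : ℕ) :
    connectorTail b n - connectorTail b (n + 1) = connector n b := by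
  rw [connectorTail, connectorTail, connector, show n + 1 + b + 1 = n + b + 1 + 1 by ring,
    Nat.factorial_succ (n + b + 1), Nat.factorial_succ n]
  push_cast
  field_simp
  ring

lemma connectorTail_zero (b : ℕ) : connectorTail b 0 = 1 / ((b : ℝ) + 1) ^ 2 := by
  rw [connectorTail, zero_add, Nat.factorial_succ]
  push_cast
  field_simp
  simp

lemma connectorTail_succ (a b : ℕ) :
    connectorTail b (a + 1) = connector a b * (a + 1) / (b + 1) := by
  rw [connectorTail, connector, show a + 1 + b + 1 = a + b + 2 by ring, Nat.factorial_succ a]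
  push_cast
  field_simp

lemma tendsto_connectorTail (b : ℕ) : Tendsto (connectorTail b) atTop (𝓝 0) := by
  refine squeeze_zero (fun n => ?_) (fun n => ?_) tendsto_one_div_add_atTop_nhds_zero_nat
  · rw [connectorTail]
    positivity
  · have h : (n.factorial : ℝ) * b.factorial ≤ (n + b).factorial := by
      exact_mod_cast Nat.le_of_dvd (Nat.factorial_pos _)
        (Nat.factorial_mul_factorial_dvd_factorial_add n b)
    rw [connectorTail, Nat.factorial_succ, div_le_div_iff₀ (by positivity) (by positivity), one_mul]
    push_cast
    have hb : (0 : ℝ) ≤ b := b.cast_nonneg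
    have hn : (0 : ℝ) ≤ n := n.cast_nonneg
    have hf : (0 : ℝ) ≤ (n + b).factorial := Nat.cast_nonneg _
    calc (n.factorial : ℝ) * b.factorial * (n + 1) ≤ (n + b).factorial * (n + 1) := by gcongr
      _ ≤ (b + 1) * ((n + b + 1) * (n + b).factorial) := by
        nlinarith [mul_nonneg hb hf, mul_nonneg hn hf, mul_nonneg hb (mul_nonneg hn hf),
          mul_nonneg hb (mul_nonneg hb hf)]

lemma hasSum_connector (b n : ℕ) : HasSum (fun i => connector (i + n) b) (connectorTail b n) := by
  rw [hasSum_iff_tendsto_nat_of_nonneg fun i => connector_nonneg _ _]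
  have h := ((tendsto_connectorTail b).comp (tendsto_add_atTop_nat n)).const_sub
    (connectorTail b n)
  rw [sub_zero] at h
  refine h.congr fun m => ?_
  have := Finset.sum_range_sub' (fun i => connectorTail b (i + n)) m
  rw [zero_add] at this
  rw [Function.comp_apply, ← this]
  refine Finset.sum_congr rfl fun i _ => ?_
  rw [← connectorTail_sub, add_right_comm]

lemma tsum_ofReal_connector (b n : ℕ) :
    ∑' i, ENNReal.ofReal (connector (i + n) b) = ENNReal.ofReal (connectorTail b n) := by
  rw [← (hasSum_connector b n).tsum_eq,
    ENNReal.ofReal_tsum_of_nonneg (fun i => connector_nonneg _ _) (hasSum_connector b n).summable]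

lemma tsum_ofReal_connector_gt (a b : ℕ) :
    ∑' m, (if a < m then ENNReal.ofReal (connector m b) else 0)
      = ENNReal.ofReal (connector a b * (a + 1) / (b + 1)) := by
  rw [← connectorTail_succ, ← tsum_ofReal_connector,
    ← ENNReal.summable.sum_add_tsum_nat_add' (k := a + 1), Finset.sum_eq_zero, zero_add]
  · exact tsum_congr fun i => if_pos (by lia)
  · intro i hi
    exact if_neg (by simpa [Nat.lt_succ_iff] using hi)

lemma hasSum_cbCoeff_four_succ :
    HasSum (fun n => cbCoeff 4 (n + 1)) (powSum (cbCoeff 4) 1) := by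
  have h : Summable (cbCoeff 4) := by
    simpa using (convOn_cbCoeff 4).summable (x := 1) (by simp)
  rw [hasSum_nat_add_iff 1]
  simpa [powSum, cbCoeff] using h.hasSum

lemma hasSum_harmonicSq_mul_succ :
    HasSum (fun n => harmonicSq (n + 1) * cbCoeff 2 (n + 1)) (Real.pi ^ 4 / 1944) := by
  have h : Summable fun n => harmonicSq n * cbCoeff 2 n := by
    simpa using convOn_harmonicSq_mul.summable (x := 1) (by simp)
  rw [hasSum_nat_add_iff (f := fun n => harmonicSq n * cbCoeff 2 n) 1,
    ← tsum_harmonicSq_mul_cbCoeff]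
  simpa [cbCoeff] using h.hasSum

lemma ofReal_harmonicSq_succ (a : ℕ) :
    ∑ j ∈ Finset.range a, ENNReal.ofReal (1 / ((j : ℝ) + 1) ^ 2)
      = ENNReal.ofReal (harmonicSq (a + 1)) := by
  rw [← ENNReal.ofReal_sum_of_nonneg fun i _ => by positivity, harmonicSq, Finset.sum_range_succ']
  simp

lemma tsum_harmonicSq_div_sq :
    2 * ∑' a : ℕ, (∑ j ∈ Finset.range a, ENNReal.ofReal (1 / ((j : ℝ) + 1) ^ 2))
      * ENNReal.ofReal (1 / ((a : ℝ) + 1) ^ 2) + ENNReal.ofReal (Real.pi ^ 4 / 90)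
      = ENNReal.ofReal (Real.pi ^ 4 / 36) := by
  have h2 : ∑' a : ℕ, ENNReal.ofReal (1 / ((a : ℝ) + 1) ^ 2)
      = ENNReal.ofReal (Real.pi ^ 2 / 6) := by
    rw [← li_two_one, li, ENNReal.ofReal_tsum_of_nonneg (fun i => by positivity)]
    · simp
    · simpa using summable_li le_rfl
  have h4 : ∑' a : ℕ, ENNReal.ofReal (1 / ((a : ℝ) + 1) ^ 2)
      * ENNReal.ofReal (1 / ((a : ℝ) + 1) ^ 2)
      = ENNReal.ofReal (Real.pi ^ 4 / 90) := by
    rw [← li_four_one, li, ENNReal.ofReal_tsum_of_nonneg (fun i => by positivity)]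
    · refine tsum_congr fun a => ?_
      rw [← ENNReal.ofReal_mul (by positivity)]
      congr 1
      rw [one_pow]
      field_simp
    · simpa using summable_li (by norm_num : 2 ≤ 4)
  set r : ℕ → ENNReal := fun a => ENNReal.ofReal (1 / ((a : ℝ) + 1) ^ 2)
  have hs := tsum_tsum_split fun a b => r a * r b
  have hZ : ∑' b, ∑' a, (if b < a then r a * r b else 0)
      = ∑' a, (∑ j ∈ Finset.range a, r j) * r a := by
    rw [ENNReal.tsum_comm]
    refine tsum_congr fun a => ?_
    rw [tsum_eq_sum (s := Finset.range a) fun j hj => if_neg (by simpa using hj), Finset.sum_mul]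
    refine Finset.sum_congr rfl fun j hj => ?_
    rw [if_pos (Finset.mem_range.1 hj), mul_comm]
  have hZ' : ∑' a, ∑' b, (if a < b then r a * r b else 0)
      = ∑' b, ∑' a, (if b < a then r a * r b else 0) :=
    tsum_congr fun a => tsum_congr fun b => by rw [mul_comm]
  rw [hZ', hZ] at hs
  simp only [ENNReal.tsum_mul_left, ENNReal.tsum_mul_right] at hs
  rw [h2, h4, ← ENNReal.ofReal_mul (by positivity)] at hs
  rw [show Real.pi ^ 4 / 36 = Real.pi ^ 2 / 6 * (Real.pi ^ 2 / 6) by ring, hs]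
  ring

lemma cbSum_four_one : powSum (cbCoeff 4) 1 = 17 * Real.pi ^ 4 / 3240 := by
  obtain ⟨Q, h1, h2⟩ := connected_sum (d := fun a b => ENNReal.ofReal (connector a b))
    (e := fun a b => ENNReal.ofReal (connector a b / ((a + 1) * (b + 1))))
    (r := fun a => ENNReal.ofReal (1 / ((a : ℝ) + 1) ^ 2))
    (fun a b => by rw [connector_comm])
    (fun a b => by rw [connector_comm, mul_comm])
    (fun a => by
      simp only [connector_comm a]
      rw [← connectorTail_zero, ← tsum_ofReal_connector]
      rfl)
    (fun b => by
      rw [tsum_ofReal_connector_gt, mul_div_cancel_right₀ _ (by positivity)])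
    (fun a b => by
      rw [tsum_ofReal_connector_gt, ← ENNReal.ofReal_mul (by positivity)]
      congr 1
      field_simp)
  have h3 := tsum_harmonicSq_div_sq
  have hS : ∑' a : ℕ, ENNReal.ofReal (1 / ((a : ℝ) + 1) ^ 2) * ENNReal.ofReal (connector a a)
      = ENNReal.ofReal (powSum (cbCoeff 4) 1) := by
    rw [← hasSum_cbCoeff_four_succ.tsum_eq, ENNReal.ofReal_tsum_of_nonneg
      (fun i => cbCoeff_nonneg _ _) hasSum_cbCoeff_four_succ.summable]
    refine tsum_congr fun a => ?_
    rw [← ENNReal.ofReal_mul (by positivity), connector_self]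
    congr 1
    have hC := cast_centralBinom_pos (a + 1)
    rw [cbCoeff, cbCoeff]
    push_cast
    field_simp
  have hT : ∑' a : ℕ, (∑ j ∈ Finset.range a, ENNReal.ofReal (1 / ((j : ℝ) + 1) ^ 2))
      * ENNReal.ofReal (connector a a) = ENNReal.ofReal (Real.pi ^ 4 / 1944) := by
    rw [← hasSum_harmonicSq_mul_succ.tsum_eq, ENNReal.ofReal_tsum_of_nonneg
      (fun i => mul_nonneg (harmonicSq_nonneg _) (cbCoeff_nonneg _ _))
      hasSum_harmonicSq_mul_succ.summable]
    refine tsum_congr fun a => ?_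
    rw [ofReal_harmonicSq_succ, connector_self, ENNReal.ofReal_mul (harmonicSq_nonneg _)]
  have hS0 : 0 ≤ powSum (cbCoeff 4) 1 :=
    hasSum_cbCoeff_four_succ.nonneg fun i => cbCoeff_nonneg _ _
  rw [hS] at h1
  rw [hT, hS] at h2
  generalize ∑' a : ℕ, (∑ j ∈ Finset.range a, ENNReal.ofReal (1 / ((j : ℝ) + 1) ^ 2))
    * ENNReal.ofReal (1 / ((a : ℝ) + 1) ^ 2) = Z at h1 h2 h3
  have hZ : Z ≠ ⊤ := by
    rintro rfl
    simp [ENNReal.mul_top] at h3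
  have hQ : Q ≠ ⊤ := by
    rintro rfl
    simp [hZ] at h2
  lift Z to NNReal using hZ
  lift Q to NNReal using hQ
  have h1' := congrArg ENNReal.toReal h1
  have h2' := congrArg ENNReal.toReal h2
  have h3' := congrArg ENNReal.toReal h3
  rw [ENNReal.toReal_add (by finiteness) (by finiteness)] at h1' h2' h3'
  rw [ENNReal.toReal_add (by finiteness) (by finiteness)] at h2'
  simp only [ENNReal.toReal_mul, ENNReal.coe_toReal, ENNReal.toReal_ofNat,
    ENNReal.toReal_ofReal hS0, ENNReal.toReal_ofReal (show 0 ≤ Real.pi ^ 4 / 90 by positivity),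
    ENNReal.toReal_ofReal (show 0 ≤ Real.pi ^ 4 / 36 by positivity),
    ENNReal.toReal_ofReal (show 0 ≤ Real.pi ^ 4 / 1944 by positivity)] at h1' h2' h3'
  linarith
lemma poch_succ (a : ℝ) (n : ℕ) : poch a (n + 1) = poch a n * (a + n) :=
  Finset.prod_range_succ _ _

lemma poch_pos {a : ℝ} (ha : 0 < a) (n : ℕ) : 0 < poch a n :=
  Finset.prod_pos fun i _ => by positivity

lemma poch_one (n : ℕ) : poch 1 n = n.factorial := by
  induction n with
  | zero => simp [poch]
  | succ n ih =>
    rw [poch_succ, ih, Nat.factorial_succ]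
    push_cast
    ring

lemma poch_three_halves (n : ℕ) : poch (3 / 2) n = (2 * n + 1) * poch (1 / 2) n := by
  induction n with
  | zero => simp [poch]
  | succ n ih =>
    rw [poch_succ, poch_succ, ih]
    push_cast
    ring

lemma poch_half_mul_centralBinom (n : ℕ) :
    poch (1 / 2) n * n.factorial * (2 * n + 1) * (2 * n + 1).centralBinom
      = 2 * 16 ^ n * (poch (3 / 4) n * poch (5 / 4) n) := by
  induction n with
  | zero => simp [poch, Nat.centralBinom]
  | succ n ih =>
    have h1 := cast_centralBinom_succ (2 * n + 1)
    have h2 := cast_centralBinom_succ (2 * n + 1 + 1)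
    rw [show 2 * (n + 1) + 1 = 2 * n + 1 + 1 + 1 by ring]
    simp only [poch_succ, Nat.factorial_succ]
    push_cast at h1 h2 ⊢
    have h3 : ((n : ℝ) + 1) * (2 * n + 3) * (2 * n + 1 + 1 + 1).centralBinom
        = 2 * (4 * n + 5) * (4 * n + 3) * (2 * n + 1).centralBinom := by
      linear_combination (n + 1) * h2 + (4 * n + 5) * h1
    linear_combination poch (1 / 2) n * n.factorial * (2 * n + 1) / 2 * h3
      + (4 * n + 5) * (4 * n + 3) * ih

lemma poch_term_eq (n : ℕ) :
    (poch (1 / 2) n) ^ 4 * (poch 1 n) ^ 2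
      / (poch (3 / 4) n * poch (5 / 4) n * (poch (3 / 2) n) ^ 3 * n.factorial) * (1 / 16 : ℝ) ^ n
      = 2 * cbCoeff 4 (2 * n + 1) := by
  have h := poch_half_mul_centralBinom n
  have h1 := poch_pos (a := 1 / 2) (by norm_num) n
  have h2 := poch_pos (a := 3 / 4) (by norm_num) n
  have h3 := poch_pos (a := 5 / 4) (by norm_num) n
  have hC := cast_centralBinom_pos (2 * n + 1)
  rw [poch_one, poch_three_halves, cbCoeff, one_div_pow]
  push_cast
  field_simp
  linear_combination h

lemma tsum_odd_cbCoeff_four :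
    ∑' n : ℕ, 2 * cbCoeff 4 (2 * n + 1) = powSum (cbCoeff 4) 1 - powSum (cbCoeff 4) (-1) := by
  have h1 := (convOn_cbCoeff 4).summable (x := 1) (by simp)
  have h2 := (convOn_cbCoeff 4).summable (x := -1) (by simp)
  have h := h1.sub h2
  have he := h.comp_injective (i := fun n : ℕ => 2 * n) fun a b hab => by simpa using hab
  have ho := h.comp_injective (i := fun n : ℕ => 2 * n + 1) fun a b hab => by simpa using hab
  have hsum := tsum_even_add_odd (f := fun n => cbCoeff 4 n * 1 ^ n - cbCoeff 4 n * (-1) ^ n) he ho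
  rw [powSum, powSum, ← h1.tsum_sub h2, ← hsum]
  simp only [pow_succ (-1 : ℝ) (2 * _), pow_mul, one_pow, neg_one_sq, sub_self, tsum_zero,
    zero_add]
  exact tsum_congr fun n => by ring

theorem sixF5_sixteenth_polylog :
    ∑' n : ℕ,
        (poch (1/2) n)^4 * (poch 1 n)^2
          / (poch (3/4) n * poch (5/4) n * (poch (3/2) n)^3 * (Nat.factorial n))
          * (1/16 : ℝ) ^ n =
      8 * Li4 ((Real.sqrt 5 - 1)/2) - (1/2) * Li4 ((3 - Real.sqrt 5)/2)
        + 4 * Li3 ((Real.sqrt 5 - 1)/2) * Real.log ((Real.sqrt 5 + 1)/2)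
        - 4 * Li3 ((1 - Real.sqrt 5)/2) * Real.log ((Real.sqrt 5 + 1)/2)
        - 47 * Real.pi^4 / 648
        - (3/2) * (Real.log ((Real.sqrt 5 + 1)/2))^4
        + (Real.pi^2 / 3) * (Real.log ((Real.sqrt 5 + 1)/2))^2 := by
  simp only [poch_term_eq, tsum_odd_cbCoeff_four]
  have h := cbSum_four_neg_one
  rw [cbSum_four_one]
  change _ = 8 * li 4 _ - 1 / 2 * li 4 _ + 4 * li 3 _ * _ - 4 * li 3 _ * _ - _ - _ + _
  linear_combination h
end
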